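/- arXiv:1509.02226 — 2 statements merged into one kernel-verified Lean document; each statement's English description precedes it below -/
import Mathlib

section
/- Repulsion of singular points: suppose α is Diophantine with exponent τ, E is such that γ(E) > 0, ρ(α) < ρ < 1, and 0 < δ < γ(E). Then there exist q₀ and a constant C > 0 (depending on α, ρ) such that if q_k ∈ Q(α,ρ), q_k > q₀, and m, n ∈ ℤ are both (γ(E) − δ, q_k)-singular for H(x) with |m − n| > (q_k + 1)/2, then |m − n| > e^{C q_k}. -/
/-!
Write `q = q_k` and `γ = γ(E)`. The argument turns a singular point into many boxes of length `q`
with an exponentially small eigenvalue, and then shows that such boxes repel each other.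

*Singular points have small determinants.* By Cramer's rule the Green function of a box is a ratio
of determinants of smaller boxes to that of the whole box (`green_left`, `green_right`). The
numerators are entries of transfer matrices, and these satisfy `‖M_n(y)‖ ≤ e^{n(γ + ε)}` uniformly
in the phase `y`, by subadditivity and a Denjoy–Koksma estimate (`eventually_ltm_le`). So if `m` is
singular, every box containing `m` well inside has a determinant of size at most
`e^{q(γ - δ/5 + ε)}` (`abs_cont_le_of_singular`).

*Small determinants come from a single small eigenvalue.* Since `‖qα‖ ≤ 1/q`, the length-`q` orbits
of any two phases agree up to a cyclic shift and an error of order `1/q`. As `v` is monotone with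
one jump per period, the eigenvalue counting functions of all boxes of length `q` differ by at most
`9`, and at most `13` eigenvalues lie within `λγ₋/q` of `0` (`cntBelow_boxEigs_le`,
`card_small_boxEigs_le`). The definition of `γ` gives a phase at which the transfer matrix has norm
at least `e^{q(γ - ε)}`. Comparing the products of eigenvalues at the two phases shows that a box
with small determinant has an eigenvalue of size at most `e^{-cq}` (`exists_small_boxEigs`).

*Repulsion.* The number of negative eigenvalues at phase `y`, corrected by the number of jumps that
have been crossed (`rotCount`), is antitone in `y` and decreases by exactly `q` over one period. An
eigenvalue of size at most `e^{-cq}` forces it to drop within distance `O(e^{-cq})`. More than `q`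
boxes contain `m` or `n` well inside, so two of these drops coincide: for two distinct starting
points `a`, `b` the distance from `(a - b)α` to the integers is `O(e^{-cq})` (`exists_close_pair`).
As `|a - b| ≤ 3|m - n|`, the Diophantine condition makes `|m - n|` exponentially large.
-/

open MeasureTheory Filter

noncomputable section

/-- Iterates of the Gauss map applied to the fractional part of `α`. -/
noncomputable def gaussIter (α : ℝ) : ℕ → ℝ
  | 0 => Int.fract α
  | n + 1 => Int.fract (1 / gaussIter α n)

/-- The continued fraction partial quotient `a_{k+1}` of `α`. -/
noncomputable def cfA (α : ℝ) (k : ℕ) : ℕ := (⌊1 / gaussIter α k⌋).toNat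

/-- Denominators `q_k` of the continued fraction convergents of `α`. -/
noncomputable def cfDen (α : ℝ) : ℕ → ℕ
  | 0 => 1
  | 1 => cfA α 0
  | k + 2 => cfA α (k + 1) * cfDen α (k + 1) + cfDen α k

/-- `ρ(α) = liminf_{k → ∞} q_{k-1} / q_{k+1}`. -/
noncomputable def cfRho (α : ℝ) : ℝ :=
  Filter.liminf (fun k : ℕ => (cfDen α k : ℝ) / (cfDen α (k + 2) : ℝ)) Filter.atTop

/-- `‖x‖ = dist(x, ℤ)`, the distance from `x` to the nearest integer. -/
noncomputable def distInt (x : ℝ) : ℝ := |x - round x|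

/-- `α` is Diophantine: `‖nα‖ ≥ C n^{-τ}` for all positive integers `n`. -/
def IsDiophantine (α : ℝ) : Prop :=
  ∃ C τ : ℝ, 0 < C ∧ 0 < τ ∧ ∀ n : ℕ, 0 < n → C * (n : ℝ) ^ (-τ) ≤ distInt ((n : ℝ) * α)

/-- The `n`-step transfer matrix `M_n(x,E) = ∏_{l=n-1}^{0} [[E - λ v(x + lα), -1],[1, 0]]`. -/
noncomputable def transferMat (lam : ℝ) (v : ℝ → ℝ) (α E x : ℝ) :
    ℕ → Matrix (Fin 2) (Fin 2) ℝ
  | 0 => 1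
  | n + 1 => !![E - lam * v (x + (n : ℝ) * α), -1; 1, 0] * transferMat lam v α E x n

/-- A norm on 2×2 real matrices (Frobenius/Hilbert-Schmidt norm). -/
noncomputable def matNorm (M : Matrix (Fin 2) (Fin 2) ℝ) : ℝ :=
  Real.sqrt (∑ i, ∑ j, (M i j) ^ 2)

/-- The Lyapunov exponent `γ(E) = inf_{n ≥ 1} (1/n) ∫₀¹ ln ‖M_n(x,E)‖ dx`. -/
noncomputable def lyap (lam : ℝ) (v : ℝ → ℝ) (α E : ℝ) : ℝ :=
  ⨅ n : ℕ+, (1 / (n : ℝ)) *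
    ∫ x in (0:ℝ)..1, Real.log (matNorm (transferMat lam v α E x (n : ℕ)))

/-- The restriction of `H(x) - E` to the integer interval `[a, a + q - 1]` with Dirichlet
boundary conditions: the Jacobi matrix with diagonal `λ v(x + jα) - E`, `j = a, …, a+q-1`,
and `1` on the off-diagonals. -/
noncomputable def jacobiBox (lam : ℝ) (v : ℝ → ℝ) (α x E : ℝ) (a : ℤ) (q : ℕ) :
    Matrix (Fin q) (Fin q) ℝ :=
  fun i j =>
    if i = j then lam * v (x + ((a : ℝ) + ((i : ℕ) : ℝ)) * α) - E
    else if (j : ℕ) = (i : ℕ) + 1 ∨ (i : ℕ) = (j : ℕ) + 1 then 1 else 0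

/-- `m` is `(μ, q)`-regular for `H(x)` at energy `E`: there is an interval
`[a, a + q - 1] ∋ m` with `|m - a|, |a + q - 1 - m| ≥ q/5` such that the Dirichlet
restriction of `H(x) - E` to it is invertible and the Green function decays exponentially
from `m` to both edges. -/
noncomputable def IsRegularPt (lam : ℝ) (v : ℝ → ℝ) (α x E μ : ℝ) (q : ℕ) (m : ℤ) : Prop :=
  ∃ a : ℤ, a ≤ m ∧ m ≤ a + (q : ℤ) - 1 ∧
    (q : ℝ) / 5 ≤ ((m - a : ℤ) : ℝ) ∧
    (q : ℝ) / 5 ≤ ((a + (q : ℤ) - 1 - m : ℤ) : ℝ) ∧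
    IsUnit (jacobiBox lam v α x E a q).det ∧
    (∀ i j : Fin q, ((i : ℕ) : ℤ) = m - a → (j : ℕ) = 0 →
      |(jacobiBox lam v α x E a q)⁻¹ i j| < Real.exp (-μ * ((m - a : ℤ) : ℝ))) ∧
    (∀ i j : Fin q, ((i : ℕ) : ℤ) = m - a → (j : ℕ) + 1 = q →
      |(jacobiBox lam v α x E a q)⁻¹ i j| < Real.exp (-μ * ((a + (q : ℤ) - 1 - m : ℤ) : ℝ)))

/-! ### Eigenvalue counting for Jacobi matrices -/

/-- The number of members of the finite family `e` that are smaller than `t`. -/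
def cntBelow {q : ℕ} (e : Fin q → ℝ) (t : ℝ) : ℕ := (Finset.univ.filter fun i => e i < t).card

/-- The `q × q` Jacobi matrix with diagonal `d` and off-diagonal entries `1`. -/
def jac {q : ℕ} (d : Fin q → ℝ) : Matrix (Fin q) (Fin q) ℝ :=
  fun i j =>
    if i = j then d i
    else if (j : ℕ) = (i : ℕ) + 1 ∨ (i : ℕ) = (j : ℕ) + 1 then 1 else 0

lemma jac_isHermitian {q : ℕ} (d : Fin q → ℝ) : (jac d).IsHermitian := by
  ext i j
  simp only [Matrix.conjTranspose_apply, star_trivial, jac]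
  by_cases h : i = j
  · subst h; simp
  · rw [if_neg h, if_neg (Ne.symm h)]
    simp only [or_comm]

/-- The eigenvalues of the Jacobi matrix with diagonal `d`. -/
def eigs {q : ℕ} (d : Fin q → ℝ) : Fin q → ℝ := (jac_isHermitian d).eigenvalues

/-- The spectral theorem as a diagonalisation of the quadratic form of `A`. -/
lemma exists_diagonalization {q : ℕ} {A : Matrix (Fin q) (Fin q) ℝ} (hA : A.IsHermitian) :
    ∃ U : Matrix (Fin q) (Fin q) ℝ, ∀ ψ : Fin q → ℝ,
      ψ ⬝ᵥ A.mulVec ψ = ∑ i, hA.eigenvalues i * (U.mulVec ψ i) ^ 2 ∧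
      ψ ⬝ᵥ ψ = ∑ i, (U.mulVec ψ i) ^ 2 := by
  set V : Matrix (Fin q) (Fin q) ℝ := (hA.eigenvectorUnitary : Matrix (Fin q) (Fin q) ℝ) with hV
  have h1 : A = V * Matrix.diagonal hA.eigenvalues * V.transpose := by
    conv_lhs => rw [hA.spectral_theorem]
    rw [Unitary.conjStarAlgAut_apply]
    rfl
  have h2 : V * V.transpose = 1 := by
    have := Unitary.mul_star_self_of_mem hA.eigenvectorUnitary.2
    exact this
  refine ⟨V.transpose, fun ψ => ⟨?_, ?_⟩⟩
  · conv_lhs => rw [h1]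
    rw [← Matrix.mulVec_mulVec, ← Matrix.mulVec_mulVec, Matrix.dotProduct_mulVec,
      ← Matrix.mulVec_transpose]
    simp only [dotProduct, Matrix.mulVec_diagonal]
    exact Finset.sum_congr rfl fun i _ => by ring
  · have h3 : ψ ⬝ᵥ ψ = ψ ⬝ᵥ (V * V.transpose).mulVec ψ := by rw [h2, Matrix.one_mulVec]
    rw [h3, ← Matrix.mulVec_mulVec, Matrix.dotProduct_mulVec, ← Matrix.mulVec_transpose]
    simp only [dotProduct]
    exact Finset.sum_congr rfl fun i _ => by ring

/-- Weyl-type inequality: if the form of `A` dominates that of `B`, transported by the isometry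
`T`, plus `c`, on the subspace of vectors vanishing on `S`, then `A` has at most `|S|` more
eigenvalues below `t` than `B` has below `t - c`. -/
lemma cntBelow_le_of_form {q : ℕ} {A B : Matrix (Fin q) (Fin q) ℝ} (hA : A.IsHermitian)
    (hB : B.IsHermitian) (T : (Fin q → ℝ) →ₗ[ℝ] (Fin q → ℝ)) (S : Finset (Fin q)) (c t : ℝ)
    (hT : ∀ ψ, T ψ ⬝ᵥ T ψ = ψ ⬝ᵥ ψ)
    (hQ : ∀ ψ : Fin q → ℝ, (∀ i ∈ S, ψ i = 0) →
      T ψ ⬝ᵥ B.mulVec (T ψ) + c * (ψ ⬝ᵥ ψ) ≤ ψ ⬝ᵥ A.mulVec ψ) :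
    cntBelow hA.eigenvalues t ≤ cntBelow hB.eigenvalues (t - c) + S.card := by
  by_contra hcon
  push Not at hcon
  obtain ⟨U, hU⟩ := exists_diagonalization hA
  obtain ⟨V, hV⟩ := exists_diagonalization hB
  set SA : Finset (Fin q) := Finset.univ.filter fun i => ¬ hA.eigenvalues i < t with hSA
  set SB : Finset (Fin q) := Finset.univ.filter fun i => hB.eigenvalues i < t - c with hSB
  let f : (Fin q → ℝ) →ₗ[ℝ] (SA → ℝ) × (S → ℝ) × (SB → ℝ) :=
    ((LinearMap.funLeft ℝ ℝ (Subtype.val : SA → Fin q)).comp U.mulVecLin).prod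
      ((LinearMap.funLeft ℝ ℝ (Subtype.val : S → Fin q)).prod
        ((LinearMap.funLeft ℝ ℝ (Subtype.val : SB → Fin q)).comp (V.mulVecLin.comp T)))
  have hcard : SA.card + cntBelow hA.eigenvalues t = q := by
    have := Finset.card_filter_add_card_filter_not (s := (Finset.univ : Finset (Fin q)))
      (fun i => hA.eigenvalues i < t)
    rw [Finset.card_univ, Fintype.card_fin] at this
    unfold cntBelow
    rw [hSA]
    omega
  have hSBc : SB.card = cntBelow hB.eigenvalues (t - c) := rfl
  have hlt : Module.finrank ℝ ((SA → ℝ) × (S → ℝ) × (SB → ℝ)) < Module.finrank ℝ (Fin q → ℝ) := by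
    rw [Module.finrank_prod, Module.finrank_prod]
    simp only [Module.finrank_fintype_fun_eq_card, Fintype.card_coe, Fintype.card_fin]
    omega
  obtain ⟨ψ, hψ, hψ0⟩ := (Submodule.ne_bot_iff _).1 (LinearMap.ker_ne_bot_of_finrank_lt (f := f) hlt)
  rw [LinearMap.mem_ker] at hψ
  have e1 : ∀ i, ¬ hA.eigenvalues i < t → U.mulVec ψ i = 0 := fun i hi =>
    congrFun (congrArg Prod.fst hψ) ⟨i, by simp [hSA, not_lt.1 hi]⟩
  have e2 : ∀ i ∈ S, ψ i = 0 := fun i hi =>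
    congrFun (congrArg (fun z => z.2.1) hψ) ⟨i, hi⟩
  have e3 : ∀ i, hB.eigenvalues i < t - c → V.mulVec (T ψ) i = 0 := fun i hi =>
    congrFun (congrArg (fun z => z.2.2) hψ) ⟨i, by simp [hSB, hi]⟩
  have hpos : 0 < ψ ⬝ᵥ ψ := by
    have := Matrix.dotProduct_star_self_pos_iff (v := ψ)
    simpa using this.2 hψ0
  have hAlt : ψ ⬝ᵥ A.mulVec ψ < t * (ψ ⬝ᵥ ψ) := by
    rw [(hU ψ).2] at hpos ⊢
    rw [(hU ψ).1, Finset.mul_sum]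
    obtain ⟨i, -, hi⟩ := Finset.exists_lt_of_sum_lt (by simpa using hpos :
      ∑ _i : Fin q, (0 : ℝ) < ∑ i, (U.mulVec ψ i) ^ 2)
    refine Finset.sum_lt_sum (fun j _ => ?_) ⟨i, Finset.mem_univ i, ?_⟩
    · by_cases hj : hA.eigenvalues j < t
      · exact mul_le_mul_of_nonneg_right hj.le (sq_nonneg _)
      · simp [e1 j hj]
    · by_cases hj : hA.eigenvalues i < t
      · exact mul_lt_mul_of_pos_right hj hi
      · simp [e1 i hj] at hi
  have hBge : (t - c) * (T ψ ⬝ᵥ T ψ) ≤ T ψ ⬝ᵥ B.mulVec (T ψ) := by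
    rw [(hV (T ψ)).1, (hV (T ψ)).2, Finset.mul_sum]
    refine Finset.sum_le_sum fun j _ => ?_
    by_cases hj : hB.eigenvalues j < t - c
    · simp [e3 j hj]
    · exact mul_le_mul_of_nonneg_right (not_lt.1 hj) (sq_nonneg _)
  have := hQ ψ e2
  rw [hT] at hBge
  linarith

lemma jac_eq_diagonal_add {q : ℕ} (d : Fin q → ℝ) : jac d = Matrix.diagonal d + jac 0 := by
  ext i j
  simp only [jac, Matrix.add_apply, Matrix.diagonal_apply, Pi.zero_apply]
  split_ifs <;> simp

lemma form_jac {q : ℕ} (d ψ : Fin q → ℝ) :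
    ψ ⬝ᵥ (jac d).mulVec ψ = ∑ i, d i * ψ i ^ 2 + ψ ⬝ᵥ (jac 0).mulVec ψ := by
  rw [jac_eq_diagonal_add, Matrix.add_mulVec, dotProduct_add]
  congr 1
  simp only [dotProduct, Matrix.mulVec_diagonal]
  exact Finset.sum_congr rfl fun i _ => by ring

/-- Raising the diagonal by at least `c` off the set `S` shifts the eigenvalue count by `c`, up to
`|S|` eigenvalues. -/
lemma cntBelow_eigs_mono {q : ℕ} (d d' : Fin q → ℝ) (S : Finset (Fin q)) (c t : ℝ)
    (h : ∀ i, i ∉ S → d' i + c ≤ d i) :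
    cntBelow (eigs d) t ≤ cntBelow (eigs d') (t - c) + S.card := by
  refine cntBelow_le_of_form _ _ LinearMap.id S c t (fun ψ => rfl) fun ψ hψ => ?_
  rw [LinearMap.id_apply, form_jac d, form_jac d',
    show ψ ⬝ᵥ ψ = ∑ i, ψ i * ψ i from rfl, Finset.mul_sum]
  have : ∑ i, d' i * ψ i ^ 2 + ∑ i, c * (ψ i * ψ i) ≤ ∑ i, d i * ψ i ^ 2 := by
    rw [← Finset.sum_add_distrib]
    refine Finset.sum_le_sum fun i _ => ?_
    by_cases hi : i ∈ S
    · simp [hψ i hi]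
    · nlinarith [h i hi, sq_nonneg (ψ i)]
  linarith

lemma fin_succ_iff {n : ℕ} (a b : Fin (n + 1)) (ha : a ≠ Fin.last n) :
    (b : ℕ) = (a : ℕ) + 1 ↔ b = a + 1 := by
  have : a < Fin.last n := lt_of_le_of_ne (Fin.le_last a) ha
  rw [Fin.ext_iff, Fin.val_add_one_of_lt this]

/-- A cyclic shift of the diagonal changes the eigenvalue count by at most two: the quadratic forms
agree on vectors vanishing at the two sites where the cyclic order is cut. -/
lemma cntBelow_eigs_rotate {n : ℕ} (d : Fin (n + 1) → ℝ) (j : Fin (n + 1)) (t : ℝ) :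
    cntBelow (eigs d) t ≤ cntBelow (eigs fun i => d (i + j)) t + 2 := by
  have key : cntBelow (eigs d) t ≤ cntBelow (eigs fun i => d (i + j)) (t - 0) +
      ({Fin.last n, Fin.last n + j} : Finset (Fin (n + 1))).card := by
    refine cntBelow_le_of_form _ _ (LinearMap.funLeft ℝ ℝ (fun i => i + j)) _ 0 t
      (fun ψ => ?_) fun ψ hψ => ?_
    · exact Equiv.sum_comp (Equiv.addRight j) (fun i => ψ i * ψ i)
    · rw [form_jac d, form_jac, zero_mul, add_zero]
      apply le_of_eq
      congr 1
      · exact Equiv.sum_comp (Equiv.addRight j) (fun i => d i * ψ i ^ 2)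
      · have hl : ψ (Fin.last n) = 0 := hψ _ (by simp)
        have hj : ψ (Fin.last n + j) = 0 := hψ _ (by simp)
        simp only [dotProduct, Matrix.mulVec, Finset.mul_sum]
        rw [← Equiv.sum_comp (Equiv.addRight j)
          (fun a => ∑ b, ψ a * (jac 0 a b * ψ b))]
        refine Finset.sum_congr rfl fun a _ => ?_
        rw [← Equiv.sum_comp (Equiv.addRight j)
          (fun b => ψ (Equiv.addRight j a) * (jac 0 (Equiv.addRight j a) b * ψ b))]
        refine Finset.sum_congr rfl fun b _ => ?_
        simp only [LinearMap.funLeft_apply, Equiv.coe_addRight]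
        by_cases h1 : a = Fin.last n
        · simp [h1, hj]
        by_cases h2 : b = Fin.last n
        · simp [h2, hj]
        by_cases h3 : a + j = Fin.last n
        · simp [h3, hl]
        by_cases h4 : b + j = Fin.last n
        · simp [h4, hl]
        have : (jac 0 a b : ℝ) = jac 0 (a + j) (b + j) := by
          simp only [jac, fin_succ_iff _ _ h1, fin_succ_iff _ _ h2, fin_succ_iff _ _ h3,
            fin_succ_iff _ _ h4, add_left_inj, add_right_comm _ j 1,
            Pi.zero_apply]
        rw [this]
  rw [sub_zero] at key
  exact key.trans (Nat.add_le_add_left Finset.card_le_two _)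

lemma abs_eigs_le {q : ℕ} (d : Fin q → ℝ) (D : ℝ) (hd : ∀ i, |d i| ≤ D) (i : Fin q) :
    |eigs d i| ≤ D + q := by
  have h1 : Module.End.HasEigenvalue (Matrix.toLin' (jac d)) (eigs d i) := by
    refine Module.End.hasEigenvalue_of_hasEigenvector
      (x := ((jac_isHermitian d).eigenvectorBasis i).ofLp) ⟨?_, ?_⟩
    · rw [Module.End.mem_eigenspace_iff, Matrix.toLin'_apply]
      exact (jac_isHermitian d).mulVec_eigenvectorBasis i
    · intro h
      have := (jac_isHermitian d).eigenvectorBasis.orthonormal.ne_zero i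
      exact this (by ext k; simp [h])
  obtain ⟨k, hk⟩ := eigenvalue_mem_ball h1
  rw [Metric.mem_closedBall, Real.dist_eq] at hk
  have h2 : ∑ j ∈ Finset.univ.erase k, ‖jac d k j‖ ≤ q := by
    calc _ ≤ ∑ j ∈ Finset.univ.erase k, (1 : ℝ) := by
          refine Finset.sum_le_sum fun j hj => ?_
          have : k ≠ j := (Finset.ne_of_mem_erase hj).symm
          simp only [jac, if_neg this]
          split_ifs <;> simp
      _ ≤ ∑ j : Fin q, (1 : ℝ) := Finset.sum_le_sum_of_subset_of_nonneg (Finset.erase_subset _ _)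
          (fun _ _ _ => zero_le_one)
      _ = q := by simp
  have h3 : jac d k k = d k := by simp [jac]
  rw [h3] at hk
  have := abs_sub_abs_le_abs_sub (eigs d i) (d k)
  linarith [hd k]

lemma abs_det_jac {q : ℕ} (d : Fin q → ℝ) : |(jac d).det| = ∏ i, |eigs d i| := by
  rw [(jac_isHermitian d).det_eq_prod_eigenvalues, Finset.abs_prod]
  rfl

/-! ### Products of families with close counting functions -/

lemma ae_eq_indicator_Iic (χ : ℝ → ℝ → Prop) [∀ t c, Decidable (χ t c)]
    (h1 : ∀ t c, t < c → χ t c) (h2 : ∀ t c, χ t c → t ≤ c) (c : ℝ) :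
    (fun t => if χ t c then (1 : ℝ) else 0) =ᵐ[volume]
      Set.indicator {t | t ≤ c} (fun _ => (1 : ℝ)) := by
  have : ∀ᵐ t : ℝ, t ≠ c := by
    have := (measure_singleton (μ := (volume : Measure ℝ)) c)
    exact compl_mem_ae_iff.2 this
  filter_upwards [this] with t ht
  rcases lt_or_gt_of_ne ht with h | h
  · rw [if_pos (h1 t c h), Set.indicator_of_mem]
    exact h.le
  · rw [if_neg (fun hc => absurd (h2 t c hc) (not_le.2 h)), Set.indicator_of_notMem]
    exact not_le.2 h

/-- Layer-cake comparison: `χ t c` is `t < c` or `t ≤ c`, or anything in between. If for every level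
`t` the family `w` has at most `K` more members above `t` than `u`, then its sum exceeds that of `u` by at most
`K` times the length of the range. -/
lemma sum_le_sum_of_counts {q : ℕ} (u w : Fin q → ℝ) (lo hi : ℝ) (K : ℕ) (hlh : lo ≤ hi)
    (χ : ℝ → ℝ → Prop) [∀ t c, Decidable (χ t c)]
    (h1 : ∀ t c, t < c → χ t c) (h2 : ∀ t c, χ t c → t ≤ c)
    (hu : ∀ i, lo ≤ u i ∧ u i ≤ hi) (hw : ∀ i, lo ≤ w i ∧ w i ≤ hi)
    (hc : ∀ t, lo < t → t ≤ hi → (Finset.univ.filter fun i => χ t (w i)).card ≤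
      (Finset.univ.filter fun i => χ t (u i)).card + K) :
    ∑ i, w i ≤ ∑ i, u i + K * (hi - lo) := by
  have hIntble : ∀ c, IntervalIntegrable (fun t => if χ t c then (1 : ℝ) else 0) volume lo hi := by
    intro c
    rw [intervalIntegrable_iff]
    refine Integrable.congr ?_ (ae_restrict_of_ae (ae_eq_indicator_Iic χ h1 h2 c).symm)
    refine Integrable.indicator ?_ measurableSet_Iic
    exact intervalIntegrable_iff.1 intervalIntegrable_const
  have hval : ∀ c, lo ≤ c → c ≤ hi →
      ∫ t in lo..hi, (if χ t c then (1 : ℝ) else 0) = c - lo := by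
    intro c hc1 hc2
    rw [intervalIntegral.integral_congr_ae
      (g := Set.indicator {t | t ≤ c} (fun _ => (1 : ℝ))),
      intervalIntegral.integral_indicator ⟨hc1, hc2⟩]
    · simp
    · filter_upwards [ae_eq_indicator_Iic χ h1 h2 c] with t ht _ using ht
  have hsum : ∀ u : Fin q → ℝ, (∀ i, lo ≤ u i ∧ u i ≤ hi) →
      ∫ t in lo..hi, ((Finset.univ.filter fun i => χ t (u i)).card : ℝ) =
        ∑ i, u i - q * lo := by
    intro u hu
    have : ∀ t, ((Finset.univ.filter fun i => χ t (u i)).card : ℝ) =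
        ∑ i, if χ t (u i) then (1 : ℝ) else 0 := by
      intro t; simp
    simp only [this]
    rw [intervalIntegral.integral_finsetSum fun i _ => hIntble (u i)]
    rw [Finset.sum_congr rfl fun i _ => hval (u i) (hu i).1 (hu i).2]
    simp
  have hInt : ∀ u : Fin q → ℝ, IntervalIntegrable
      (fun t => ((Finset.univ.filter fun i => χ t (u i)).card : ℝ)) volume lo hi := by
    intro u
    have : (fun t => ((Finset.univ.filter fun i => χ t (u i)).card : ℝ)) =
        fun t => ∑ i, if χ t (u i) then (1 : ℝ) else 0 := by
      ext t; simp
    rw [this]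
    simp only [intervalIntegrable_iff]
    exact integrable_finsetSum _ fun i _ => intervalIntegrable_iff.1 (hIntble (u i))
  have hmono := intervalIntegral.integral_mono_on_of_le_Ioo hlh (hInt w)
    ((hInt u).add (intervalIntegrable_const (c := (K : ℝ)))) (fun t ht => by
      have := hc t ht.1 ht.2.le
      exact_mod_cast this)
  rw [hsum w hw] at hmono
  rw [intervalIntegral.integral_add (hInt u) intervalIntegrable_const, hsum u hu,
    intervalIntegral.integral_const, smul_eq_mul] at hmono
  linarith

lemma log_max_abs (s ε : ℝ) (hε : 0 < ε) :
    Real.log (max |s| ε) = Real.log (max s ε) + Real.log (max (-s) ε) - Real.log ε := by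
  rcases le_total 0 s with h | h
  · rw [abs_of_nonneg h, max_eq_right (by linarith : -s ≤ ε)]; ring
  · rw [abs_of_nonpos h, max_eq_right (by linarith : s ≤ ε)]; ring

/-- Two families with nearly equal counting functions have nearly equal products, once members
closer than `ε` to zero are replaced by `ε`. -/
lemma sum_log_max_le {q : ℕ} (a b : Fin q → ℝ) (ε R : ℝ) (K : ℕ) (hε : 0 < ε) (hεR : ε ≤ R)
    (ha : ∀ i, |a i| ≤ R) (hb : ∀ i, |b i| ≤ R)
    (hab : ∀ t, cntBelow a t ≤ cntBelow b t + K) (hba : ∀ t, cntBelow b t ≤ cntBelow a t + K) :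
    ∑ i, Real.log (max |b i| ε) ≤ ∑ i, Real.log (max |a i| ε) +
      2 * K * (Real.log R - Real.log ε) := by
  have hlog : Real.log ε ≤ Real.log R := Real.log_le_log hε hεR
  have hrange : ∀ s, |s| ≤ R → Real.log ε ≤ Real.log (max s ε) ∧
      Real.log (max s ε) ≤ Real.log R := fun s hs =>
    ⟨Real.log_le_log hε (le_max_right _ _), Real.log_le_log (lt_max_of_lt_right hε)
      (max_le ((le_abs_self s).trans hs) hεR)⟩
  have hcompl : ∀ (c : Fin q → ℝ) t,
      (Finset.univ.filter fun i => t ≤ c i).card + cntBelow c t = q := by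
    intro c t
    have := Finset.card_filter_add_card_filter_not (s := (Finset.univ : Finset (Fin q)))
      (fun i => c i < t)
    simp only [not_lt, Finset.card_univ, Fintype.card_fin] at this
    unfold cntBelow
    omega
  have h1 := sum_le_sum_of_counts (fun i => Real.log (max (a i) ε))
    (fun i => Real.log (max (b i) ε)) (Real.log ε) (Real.log R) K hlog (fun t c => t ≤ c)
    (fun _ _ h => h.le) (fun _ _ h => h) (fun i => hrange _ (ha i)) (fun i => hrange _ (hb i)) (by
      intro t ht _
      have hiff : ∀ s, t ≤ Real.log (max s ε) ↔ Real.exp t ≤ s := by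
        intro s
        have h2 : ε < Real.exp t := (Real.log_lt_iff_lt_exp hε).1 ht
        rw [Real.le_log_iff_exp_le (lt_max_of_lt_right hε), le_max_iff]
        constructor
        · rintro (h | h)
          · exact h
          · linarith
        · exact Or.inl
      simp only [hiff]
      have := hcompl a (Real.exp t)
      have := hcompl b (Real.exp t)
      have := hab (Real.exp t)
      omega)
  have h2 := sum_le_sum_of_counts (fun i => Real.log (max (-a i) ε))
    (fun i => Real.log (max (-b i) ε)) (Real.log ε) (Real.log R) K hlog (fun t c => t < c)
    (fun _ _ h => h) (fun _ _ h => h.le) (fun i => hrange _ (by rw [abs_neg]; exact ha i))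
    (fun i => hrange _ (by rw [abs_neg]; exact hb i)) (by
      intro t ht _
      have hiff : ∀ s, t < Real.log (max (-s) ε) ↔ s < - Real.exp t := by
        intro s
        have h2 : ε < Real.exp t := (Real.log_lt_iff_lt_exp hε).1 ht
        rw [Real.lt_log_iff_exp_lt (lt_max_of_lt_right hε), lt_max_iff]
        constructor
        · rintro (h | h) <;> linarith
        · intro h; left; linarith
      simp only [hiff]
      exact hba _)
  simp only [log_max_abs _ ε hε, Finset.sum_sub_distrib, Finset.sum_add_distrib]
  linarith

/-- If all but `K'` members of `a` have absolute value at least `ε` and all of them at least `η`,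
then truncation at `ε` costs at most a factor `η ^ K'`. -/
lemma sum_log_max_le_sum_log {q : ℕ} (a : Fin q → ℝ) (ε η : ℝ) (K' : ℕ) (hε1 : ε ≤ 1)
    (hη : 0 < η) (hη1 : η ≤ 1)
    (ha : ∀ i, η ≤ |a i|) (hcnt : (Finset.univ.filter fun i => |a i| < ε).card ≤ K') :
    ∑ i, Real.log (max |a i| ε) + K' * Real.log η ≤ ∑ i, Real.log |a i| := by
  have hlη : Real.log η ≤ 0 := Real.log_nonpos hη.le hη1
  have h1 : ∑ i, Real.log (max |a i| ε) + ∑ i, (if |a i| < ε then Real.log η else 0) ≤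
      ∑ i, Real.log |a i| := by
    rw [← Finset.sum_add_distrib]
    refine Finset.sum_le_sum fun i _ => ?_
    have hpos : 0 < |a i| := hη.trans_le (ha i)
    split_ifs with h
    · have : Real.log (max |a i| ε) ≤ 0 :=
        Real.log_nonpos (le_max_of_le_left (abs_nonneg _)) (max_le (h.le.trans hε1) hε1)
      have := Real.log_le_log hη (ha i)
      linarith
    · rw [max_eq_left (not_lt.1 h), add_zero]
  rw [← Finset.sum_filter, Finset.sum_const, nsmul_eq_mul] at h1
  have : (K' : ℝ) * Real.log η ≤
      ((Finset.univ.filter fun i => |a i| < ε).card : ℝ) * Real.log η :=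
    mul_le_mul_of_nonpos_right (by exact_mod_cast hcnt) hlη
  linarith

/-! ### Transfer matrices, continuants and the Green function -/

/-- The one-step transfer matrix. -/
def stepMat (s : ℝ) : Matrix (Fin 2) (Fin 2) ℝ := !![s, -1; 1, 0]

/-- The `n`-step transfer matrix of an arbitrary sequence `w`. -/
def tm (w : ℕ → ℝ) : ℕ → Matrix (Fin 2) (Fin 2) ℝ
  | 0 => 1
  | n + 1 => stepMat (w n) * tm w n

/-- The continuant of `w 0, …, w (n - 1)`: the determinant of the Jacobi matrix with this
diagonal (see `det_jac`). -/
def cont (w : ℕ → ℝ) (n : ℕ) : ℝ := tm w n 0 0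

lemma transferMat_eq_tm (lam : ℝ) (v : ℝ → ℝ) (α E x : ℝ) (n : ℕ) :
    transferMat lam v α E x n = tm (fun l => E - lam * v (x + (l : ℝ) * α)) n := by
  induction n with
  | zero => rfl
  | succ n ih => rw [transferMat, tm, ih, stepMat]

lemma tm_add (w : ℕ → ℝ) (m n : ℕ) : tm w (m + n) = tm (fun i => w (m + i)) n * tm w m := by
  induction n with
  | zero => simp [tm]
  | succ n ih => rw [← add_assoc, tm, tm, ih, Matrix.mul_assoc]

lemma tm_succ' (w : ℕ → ℝ) (n : ℕ) :
    tm w (n + 1) = tm (fun i => w (i + 1)) n * stepMat (w 0) := by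
  rw [add_comm n 1, tm_add]
  simp [tm, add_comm]

lemma tm_congr (w w' : ℕ → ℝ) (n : ℕ) (h : ∀ i < n, w i = w' i) : tm w n = tm w' n := by
  induction n with
  | zero => rfl
  | succ n ih => rw [tm, tm, ih fun i hi => h i (by omega), h n (by omega)]

lemma tm_succ_zero (w : ℕ → ℝ) (n : ℕ) (j : Fin 2) :
    tm w (n + 1) 0 j = w n * tm w n 0 j - tm w n 1 j := by
  simp [tm, stepMat, Matrix.mul_apply, Fin.sum_univ_two]; ring

lemma tm_succ_one (w : ℕ → ℝ) (n : ℕ) (j : Fin 2) : tm w (n + 1) 1 j = tm w n 0 j := by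
  simp [tm, stepMat, Matrix.mul_apply, Fin.sum_univ_two]

lemma tm_succ_col_zero (w : ℕ → ℝ) (n : ℕ) (i : Fin 2) :
    tm w (n + 1) i 0 = w 0 * tm (fun i => w (i + 1)) n i 0 + tm (fun i => w (i + 1)) n i 1 := by
  rw [tm_succ']; simp [stepMat, Matrix.mul_apply, Fin.sum_univ_two]; ring

lemma tm_succ_col_one (w : ℕ → ℝ) (n : ℕ) (i : Fin 2) :
    tm w (n + 1) i 1 = - tm (fun i => w (i + 1)) n i 0 := by
  rw [tm_succ']; simp [stepMat, Matrix.mul_apply, Fin.sum_univ_two]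

@[simp] lemma cont_zero (w : ℕ → ℝ) : cont w 0 = 1 := by simp [cont, tm]

@[simp] lemma cont_one (w : ℕ → ℝ) : cont w 1 = w 0 := by
  simp [cont, tm_succ_zero]; simp [tm]

lemma cont_add_two (w : ℕ → ℝ) (n : ℕ) :
    cont w (n + 2) = w (n + 1) * cont w (n + 1) - cont w n := by
  rw [cont, tm_succ_zero, tm_succ_one]; rfl

lemma cont_add_two' (w : ℕ → ℝ) (n : ℕ) :
    cont w (n + 2) = w 0 * cont (fun i => w (i + 1)) (n + 1) - cont (fun i => w (i + 2)) n := by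
  rw [cont, tm_succ_col_zero, tm_succ_col_one]; rfl

lemma abs_cont_neg (w : ℕ → ℝ) (n : ℕ) : |cont (fun i => - w i) n| = |cont w n| := by
  have : ∀ n, cont (fun i => - w i) n = (-1) ^ n * cont w n ∧
      cont (fun i => - w i) (n + 1) = (-1) ^ (n + 1) * cont w (n + 1) := by
    intro n
    induction n with
    | zero => simp
    | succ n ih =>
      refine ⟨ih.2, ?_⟩
      rw [cont_add_two, cont_add_two, ih.1, ih.2]; ring
  rw [(this n).1, abs_mul, abs_pow]; simp

lemma det_jac (n : ℕ) : ∀ d : ℕ → ℝ, (jac (fun i : Fin n => d i)).det = cont d n := by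
  induction n using Nat.strong_induction_on with
  | _ n ih =>
    intro d
    match n, ih with
    | 0, _ => simp
    | 1, _ => simp [jac]
    | n + 2, ih =>
      rw [Matrix.det_succ_row_zero, Fin.sum_univ_succ, Fin.sum_univ_succ]
      have hz : ∀ j : Fin n, jac (fun i : Fin (n + 2) => d i) 0 j.succ.succ = 0 := by
        intro j
        simp [jac, Fin.ext_iff]
      have h0 : jac (fun i : Fin (n + 2) => d i) 0 0 = d 0 := by simp [jac]
      have h1 : jac (fun i : Fin (n + 2) => d i) 0 (Fin.succ 0) = 1 := by simp [jac]
      simp only [hz, h0, h1, mul_zero, zero_mul, Finset.sum_const_zero, add_zero]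
      have e1 : (jac (fun i : Fin (n + 2) => d i)).submatrix Fin.succ (Fin.succAbove 0) =
          jac (fun i : Fin (n + 1) => d (i + 1)) := by
        ext i j
        simp [jac, Fin.ext_iff]
      have e2 : ((jac (fun i : Fin (n + 2) => d i)).submatrix Fin.succ
          (Fin.succAbove (Fin.succ 0))).det = (jac (fun i : Fin n => d (i + 2))).det := by
        rw [Matrix.det_succ_column_zero, Fin.sum_univ_succ]
        have hz' : ∀ i : Fin n, (jac (fun i : Fin (n + 2) => d i)).submatrix Fin.succ
            (Fin.succAbove (Fin.succ 0)) i.succ 0 = 0 := by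
          intro j
          simp [jac, Fin.ext_iff]
        have h1' : (jac (fun i : Fin (n + 2) => d i)).submatrix Fin.succ
            (Fin.succAbove (Fin.succ 0)) 0 0 = 1 := by simp [jac]
        simp only [hz', h1', mul_zero, zero_mul, Finset.sum_const_zero, add_zero]
        simp only [Fin.val_zero, pow_zero, one_mul]
        congr 1
        ext i j
        simp [jac, Fin.ext_iff, Fin.succAbove]
      rw [e1, e2, ih (n + 1) (by omega) (fun i => d (i + 1)),
        ih n (by omega) (fun i => d (i + 2)), cont_add_two']
      simp
      ring

lemma jac_mulVec (q : ℕ) (d ψ : ℕ → ℝ) (hψ : ψ q = 0) (i : Fin q) :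
    (jac (fun i : Fin q => d i)).mulVec (fun i => ψ i) i =
      d i * ψ i + ψ (i + 1) + if (i : ℕ) = 0 then 0 else ψ (i - 1) := by
  have h1 : (jac (fun i : Fin q => d i)).mulVec (fun i => ψ i) i =
      ∑ j : Fin q, ((if (j : ℕ) = i then d j * ψ j else 0) +
        (if (j : ℕ) = i + 1 then ψ j else 0) + if (i : ℕ) = j + 1 then ψ j else 0) := by
    rw [Matrix.mulVec, dotProduct]
    refine Finset.sum_congr rfl fun j _ => ?_
    simp only [jac, Fin.ext_iff]
    split_ifs <;> first | omega | simp_all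
  rw [h1, Fin.sum_univ_eq_sum_range (fun j => ((if j = (i : ℕ) then d j * ψ j else 0) +
        (if j = i + 1 then ψ j else 0) + if (i : ℕ) = j + 1 then ψ j else 0)) q,
    Finset.sum_add_distrib, Finset.sum_add_distrib]
  congr 1
  · congr 1
    · rw [Finset.sum_ite_eq' ]; simp
    · rw [Finset.sum_ite_eq']
      split_ifs with h
      · rfl
      · have : (i : ℕ) + 1 = q := by have := i.2; simp at h; omega
        rw [this, hψ]
  · split_ifs with h
    · exact Finset.sum_eq_zero fun j _ => by rw [if_neg (by omega)]
    · rw [Finset.sum_eq_single ((i : ℕ) - 1)]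
      · rw [if_pos (by omega)]
      · intro b _ hb; rw [if_neg (by omega)]
      · intro hb; have := i.2; simp at hb; omega

/-- If the column vector `u` solves `A u = D e_j`, it is `D` times the `j`-th column of `A⁻¹`. -/
lemma inv_apply_of_mulVec {q : ℕ} (A : Matrix (Fin q) (Fin q) ℝ) (hA : IsUnit A.det)
    (u : Fin q → ℝ) (D : ℝ) (j : Fin q) (h : A.mulVec u = fun k => if k = j then D else 0)
    (i : Fin q) : u i = A⁻¹ i j * D := by
  have : u = A⁻¹.mulVec (A.mulVec u) := by
    rw [Matrix.mulVec_mulVec, Matrix.nonsing_inv_mul _ hA, Matrix.one_mulVec]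
  rw [this, h]
  simp [Matrix.mulVec, dotProduct]

/-- Cramer's rule for the first column of the inverse. -/
lemma green_left (q : ℕ) (d : ℕ → ℝ) (hA : IsUnit (jac (fun i : Fin q => d i)).det)
    (i j : Fin q) (hj : (j : ℕ) = 0) :
    |(jac (fun i : Fin q => d i))⁻¹ i j| * |cont d q| =
      |cont (fun k => d (i + 1 + k)) (q - 1 - i)| := by
  set h : ℕ → ℝ := fun k => if k ≤ q then cont (fun l => d (k + l)) (q - k) else 0 with hh
  have hrec : ∀ k, k < q → h k = d k * h (k + 1) - h (k + 2) := by
    intro k hk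
    by_cases hk2 : k + 2 ≤ q
    · obtain ⟨n, rfl⟩ := Nat.exists_eq_add_of_le hk2
      simp only [hh, if_pos hk.le, if_pos (show k + 1 ≤ k + 2 + n by omega), if_pos hk2]
      rw [show k + 2 + n - k = n + 2 by omega, show k + 2 + n - (k + 1) = n + 1 by omega,
        show k + 2 + n - (k + 2) = n by omega, cont_add_two']
      simp [add_comm, add_left_comm]
    · have : q = k + 1 := by omega
      subst this
      simp [hh]
  have key := inv_apply_of_mulVec (jac (fun i : Fin q => d i)) hA
    (fun k => (-1) ^ (k : ℕ) * h (k + 1)) (cont d q) j (by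
      ext k
      rw [jac_mulVec q d (fun k => (-1) ^ k * h (k + 1)) (by simp [hh]) k]
      have hk := hrec k k.2
      by_cases hk0 : (k : ℕ) = 0
      · have : k = j := Fin.ext (by omega)
        rw [if_pos hk0, if_pos this]
        rw [hk0] at hk ⊢
        have h0 : h 0 = cont d q := by simp [hh]
        rw [← h0, hk]; ring
      · have : k ≠ j := fun e => hk0 (by rw [e, hj])
        rw [if_neg hk0, if_neg this, Nat.sub_add_cancel (by omega), hk]
        obtain ⟨m, hm⟩ := Nat.exists_eq_succ_of_ne_zero hk0
        rw [hm]
        simp only [Nat.succ_eq_add_one, Nat.add_sub_cancel]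
        ring) i
  rw [← abs_mul, ← key, abs_mul, abs_pow]
  simp only [hh, abs_neg, abs_one, one_pow, one_mul]
  rw [if_pos (by have := i.2; omega), show q - (i + 1) = q - 1 - i by omega]

/-- Cramer's rule for the last column of the inverse. -/
lemma green_right (q : ℕ) (d : ℕ → ℝ) (hA : IsUnit (jac (fun i : Fin q => d i)).det)
    (i j : Fin q) (hj : (j : ℕ) + 1 = q) :
    |(jac (fun i : Fin q => d i))⁻¹ i j| * |cont d q| = |cont d i| := by
  set h : ℕ → ℝ := fun k => if k < q then (-1) ^ k * cont d k else 0 with hh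
  have key := inv_apply_of_mulVec (jac (fun i : Fin q => d i)) hA
    (fun k => h k) ((-1) ^ (j : ℕ) * cont d q) j (by
      ext k
      rw [jac_mulVec q d h (by simp [hh]) k]
      have hrec : cont d (k + 1) = d k * cont d k - if (k : ℕ) = 0 then 0 else cont d (k - 1) := by
        split_ifs with hk0
        · simp [hk0]
        · obtain ⟨m, hm⟩ := Nat.exists_eq_succ_of_ne_zero hk0
          rw [hm]
          simpa using cont_add_two d m
      have hprev : (if (k : ℕ) = 0 then 0 else h (k - 1)) =
          - (-1) ^ (k : ℕ) * (if (k : ℕ) = 0 then 0 else cont d (k - 1)) := by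
        split_ifs with hk0
        · simp
        · have := k.2
          simp only [hh, if_pos (show (k : ℕ) - 1 < q by omega)]
          obtain ⟨m, hm⟩ := Nat.exists_eq_succ_of_ne_zero hk0
          rw [hm]
          simp only [Nat.succ_eq_add_one, Nat.add_sub_cancel]
          ring
      rw [hprev]
      have hk : h k = (-1) ^ (k : ℕ) * cont d k := by simp [hh]
      rw [hk]
      by_cases hkj : k = j
      · subst hkj
        rw [if_pos rfl]
        have h1 : h (k + 1) = 0 := by simp [hh, hj]
        have h2 : cont d q = cont d (k + 1) := by rw [hj]
        rw [h1, h2, hrec]; ring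
      · have hlt : (k : ℕ) + 1 < q := by
          have := k.2
          have : (k : ℕ) ≠ j := fun e => hkj (Fin.ext e)
          omega
        have h1 : h (k + 1) = (-1) ^ ((k : ℕ) + 1) * cont d (k + 1) := by simp [hh, hlt]
        rw [if_neg hkj, h1, hrec]; ring) i
  have h2 : |(jac (fun i : Fin q => d i))⁻¹ i j| * |cont d q| =
      |(jac (fun i : Fin q => d i))⁻¹ i j * ((-1) ^ (j : ℕ) * cont d q)| := by
    rw [abs_mul, abs_mul, abs_pow]; simp
  rw [h2, ← key]
  simp [hh, abs_mul]

/-! ### Norms of transfer matrices -/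

open scoped Matrix.Norms.Frobenius in
lemma matNorm_eq_norm (M : Matrix (Fin 2) (Fin 2) ℝ) : matNorm M = ‖M‖ := by
  rw [Matrix.frobenius_norm_def, matNorm, Real.sqrt_eq_rpow]
  simp

lemma matNorm_mul_le (M N : Matrix (Fin 2) (Fin 2) ℝ) :
    matNorm (M * N) ≤ matNorm M * matNorm N := by
  simp only [matNorm_eq_norm]; exact Matrix.frobenius_norm_mul M N

lemma matNorm_add_le (M N : Matrix (Fin 2) (Fin 2) ℝ) :
    matNorm (M + N) ≤ matNorm M + matNorm N := by
  simp only [matNorm_eq_norm]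
  open scoped Matrix.Norms.Frobenius in exact norm_add_le M N

lemma matNorm_nonneg (M : Matrix (Fin 2) (Fin 2) ℝ) : 0 ≤ matNorm M := Real.sqrt_nonneg _

lemma matNorm_sq (M : Matrix (Fin 2) (Fin 2) ℝ) :
    matNorm M ^ 2 = M 0 0 ^ 2 + M 0 1 ^ 2 + M 1 0 ^ 2 + M 1 1 ^ 2 := by
  rw [matNorm, Real.sq_sqrt (by positivity)]
  simp [Fin.sum_univ_two]; ring

lemma one_le_matNorm (M : Matrix (Fin 2) (Fin 2) ℝ) (h : M.det = 1) : 1 ≤ matNorm M := by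
  rw [Matrix.det_fin_two] at h
  have := matNorm_sq M
  have h2 : 1 ≤ matNorm M ^ 2 := by
    nlinarith [sq_nonneg (M 0 0 - M 1 1), sq_nonneg (M 0 1 + M 1 0)]
  nlinarith [matNorm_nonneg M]

lemma abs_entry_le_matNorm (M : Matrix (Fin 2) (Fin 2) ℝ) : |M 0 0| ≤ matNorm M := by
  apply abs_le_of_sq_le_sq _ (matNorm_nonneg M)
  rw [matNorm_sq]
  nlinarith [sq_nonneg (M 0 1), sq_nonneg (M 1 0), sq_nonneg (M 1 1)]

lemma matNorm_adjugate (M : Matrix (Fin 2) (Fin 2) ℝ) : matNorm M.adjugate = matNorm M := by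
  have : matNorm M.adjugate ^ 2 = matNorm M ^ 2 := by
    rw [matNorm_sq, matNorm_sq, Matrix.adjugate_fin_two]
    simp; ring
  exact (pow_left_inj₀ (matNorm_nonneg _) (matNorm_nonneg _) two_ne_zero).1 this

lemma matNorm_stepMat_le (s B : ℝ) (h : |s| ≤ B) : matNorm (stepMat s) ≤ B + 2 := by
  have hB : 0 ≤ B := (abs_nonneg s).trans h
  apply le_of_sq_le_sq _ (by linarith)
  rw [matNorm_sq]
  have : s ^ 2 ≤ B ^ 2 := sq_le_sq' (by linarith [neg_abs_le s]) (by linarith [le_abs_self s])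
  simp [stepMat]
  nlinarith

lemma det_tm (w : ℕ → ℝ) (n : ℕ) : (tm w n).det = 1 := by
  induction n with
  | zero => simp [tm]
  | succ n ih => rw [tm, Matrix.det_mul, ih, stepMat, Matrix.det_fin_two]; simp

lemma one_le_matNorm_tm (w : ℕ → ℝ) (n : ℕ) : 1 ≤ matNorm (tm w n) := one_le_matNorm _ (det_tm w n)

/-- `log` of the norm of the `n`-step transfer matrix. -/
def ltm (w : ℕ → ℝ) (n : ℕ) : ℝ := Real.log (matNorm (tm w n))

lemma ltm_nonneg (w : ℕ → ℝ) (n : ℕ) : 0 ≤ ltm w n := Real.log_nonneg (one_le_matNorm_tm w n)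

lemma matNorm_tm_le (w : ℕ → ℝ) (B : ℝ) (hw : ∀ i, |w i| ≤ B) (n : ℕ) :
    matNorm (tm w n) ≤ 2 * (B + 2) ^ n := by
  have hB : 0 ≤ B := (abs_nonneg _).trans (hw 0)
  induction n with
  | zero =>
    apply le_of_sq_le_sq _ (by norm_num)
    rw [matNorm_sq]; simp [tm]; norm_num
  | succ n ih =>
    rw [tm]
    refine (matNorm_mul_le _ _).trans ?_
    have := mul_le_mul (matNorm_stepMat_le _ _ (hw n)) ih (matNorm_nonneg _) (by linarith)
    calc _ ≤ _ := this
      _ = _ := by ring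

lemma ltm_add_le (w : ℕ → ℝ) (m n : ℕ) :
    ltm w (m + n) ≤ ltm w m + ltm (fun i => w (m + i)) n := by
  unfold ltm
  rw [add_comm (Real.log _), ← Real.log_mul (by linarith [one_le_matNorm_tm (fun i => w (m + i)) n])
    (by linarith [one_le_matNorm_tm w m]), tm_add]
  refine Real.log_le_log ?_ (matNorm_mul_le _ _)
  rw [← tm_add]; linarith [one_le_matNorm_tm w (m + n)]

/-- Unimodularity bounds the shorter product by the longer one. -/
lemma ltm_le_add (w : ℕ → ℝ) (m n : ℕ) :
    ltm w m ≤ ltm w (m + n) + ltm (fun i => w (m + i)) n := by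
  unfold ltm
  rw [add_comm (Real.log _), ← Real.log_mul (by linarith [one_le_matNorm_tm (fun i => w (m + i)) n])
    (by linarith [one_le_matNorm_tm w (m + n)])]
  refine Real.log_le_log (by linarith [one_le_matNorm_tm w m]) ?_
  have : tm w m = (tm (fun i => w (m + i)) n).adjugate * tm w (m + n) := by
    rw [tm_add, ← Matrix.mul_assoc, Matrix.adjugate_mul, det_tm, one_smul, Matrix.one_mul]
  conv_lhs => rw [this]
  rw [← matNorm_adjugate (tm (fun i => w (m + i)) n)]
  exact matNorm_mul_le _ _

lemma ltm_le_of_bound (w : ℕ → ℝ) (B : ℝ) (hw : ∀ i, |w i| ≤ B) (n N : ℕ) (hn : n ≤ N) :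
    ltm w n ≤ Real.log 2 + N * Real.log (B + 2) := by
  have hB : 0 ≤ B := (abs_nonneg _).trans (hw 0)
  have h1 : ltm w n ≤ Real.log (2 * (B + 2) ^ n) :=
    Real.log_le_log (by linarith [one_le_matNorm_tm w n]) (matNorm_tm_le w B hw n)
  rw [Real.log_mul (by norm_num) (by positivity), Real.log_pow] at h1
  have : (n : ℝ) * Real.log (B + 2) ≤ N * Real.log (B + 2) :=
    mul_le_mul_of_nonneg_right (by exact_mod_cast hn) (Real.log_nonneg (by linarith))
  linarith

lemma ltm_block (w : ℕ → ℝ) (r n₀ b : ℕ) :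
    ltm w (r + n₀ * b) ≤ ltm w r +
      ∑ j ∈ Finset.range b, ltm (fun i => w (r + n₀ * j + i)) n₀ := by
  induction b with
  | zero => simp
  | succ b ih =>
    rw [Finset.sum_range_succ, Nat.mul_succ, ← add_assoc]
    have := ltm_add_le w (r + n₀ * b) n₀
    linarith

lemma sum_blocks (L : ℕ → ℝ) (n₀ b : ℕ) :
    ∑ r ∈ Finset.range n₀, ∑ j ∈ Finset.range b, L (r + n₀ * j) =
      ∑ l ∈ Finset.range (n₀ * b), L l := by
  induction b with
  | zero => simp
  | succ b ih =>
    simp only [Finset.sum_range_succ, Finset.sum_add_distrib]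
    rw [ih, Nat.mul_succ, Finset.sum_range_add]
    simp only [add_comm]

/-- Subadditivity averaged over the `n₀` ways to cut `[0, n)` into blocks of length `n₀`. -/
lemma ltm_average (w : ℕ → ℝ) (B : ℝ) (hw : ∀ i, |w i| ≤ B) (n₀ n : ℕ) (hn₀ : 0 < n₀) :
    n₀ * ltm w n ≤ ∑ l ∈ Finset.range n, ltm (fun i => w (l + i)) n₀ +
      n₀ * (3 * (Real.log 2 + n₀ * Real.log (B + 2))) := by
  set c := Real.log 2 + n₀ * Real.log (B + 2) with hc
  set b := n / n₀ with hb
  have hn : n₀ * b + n % n₀ = n := Nat.div_add_mod n n₀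
  have hlt : n % n₀ < n₀ := Nat.mod_lt _ hn₀
  have h1 : ∀ r ∈ Finset.range n₀, ltm w n ≤
      ∑ j ∈ Finset.range b, ltm (fun i => w (r + n₀ * j + i)) n₀ + 3 * c := by
    intro r hr
    rw [Finset.mem_range] at hr
    have e1 := ltm_add_le w (n₀ * b) (n % n₀)
    rw [hn] at e1
    have e2 := ltm_le_add w (n₀ * b) r
    rw [add_comm (n₀ * b) r] at e2
    have e3 := ltm_block w r n₀ b
    have e4 := ltm_le_of_bound (fun i => w (n₀ * b + i)) B (fun i => hw _) (n % n₀) n₀ hlt.le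
    have e5 := ltm_le_of_bound (fun i => w (n₀ * b + i)) B (fun i => hw _) r n₀ hr.le
    have e6 := ltm_le_of_bound w B hw r n₀ hr.le
    linarith
  have h2 := Finset.sum_le_sum h1
  rw [Finset.sum_add_distrib, sum_blocks (fun l => ltm (fun i => w (l + i)) n₀)] at h2
  simp only [Finset.sum_const, Finset.card_range, nsmul_eq_mul] at h2
  have h3 : ∑ l ∈ Finset.range (n₀ * b), ltm (fun i => w (l + i)) n₀ ≤
      ∑ l ∈ Finset.range n, ltm (fun i => w (l + i)) n₀ :=
    Finset.sum_le_sum_of_subset_of_nonneg (Finset.range_mono (by omega))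
      (fun _ _ _ => ltm_nonneg _ _)
  linarith

lemma matNorm_tm_sub_le (w w' : ℕ → ℝ) (B : ℝ) (hw : ∀ i, |w i| ≤ B) (hw' : ∀ i, |w' i| ≤ B)
    (n : ℕ) : matNorm (tm w n - tm w' n) ≤
      2 * (B + 2) ^ n * ∑ i ∈ Finset.range n, |w i - w' i| := by
  have hB : 0 ≤ B := (abs_nonneg _).trans (hw 0)
  induction n with
  | zero => simp [tm, matNorm]
  | succ n ih =>
    have e : tm w (n + 1) - tm w' (n + 1) =
        (stepMat (w n) - stepMat (w' n)) * tm w n + stepMat (w' n) * (tm w n - tm w' n) := by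
      rw [tm, tm]; noncomm_ring
    have e1 : matNorm (stepMat (w n) - stepMat (w' n)) = |w n - w' n| := by
      have : matNorm (stepMat (w n) - stepMat (w' n)) ^ 2 = |w n - w' n| ^ 2 := by
        rw [matNorm_sq, sq_abs]; simp [stepMat]
      exact (pow_left_inj₀ (matNorm_nonneg _) (abs_nonneg _) two_ne_zero).1 this
    rw [e, Finset.sum_range_succ]
    have h1 := matNorm_mul_le (stepMat (w n) - stepMat (w' n)) (tm w n)
    have h2 := matNorm_mul_le (stepMat (w' n)) (tm w n - tm w' n)
    have h3 := mul_le_mul (matNorm_stepMat_le _ _ (hw' n)) ih (matNorm_nonneg _) (by linarith)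
    have h4 := mul_le_mul_of_nonneg_left (matNorm_tm_le w B hw n) (abs_nonneg (w n - w' n))
    rw [e1] at h1
    have h5 : |w n - w' n| * (2 * (B + 2) ^ n) ≤ 2 * (B + 2) ^ (n + 1) * |w n - w' n| := by
      have : (B + 2) ^ n ≤ (B + 2) ^ (n + 1) := pow_le_pow_right₀ (by linarith) (by omega)
      nlinarith [abs_nonneg (w n - w' n)]
    calc _ ≤ _ := matNorm_add_le _ _
      _ ≤ |w n - w' n| * (2 * (B + 2) ^ n) +
        (B + 2) * (2 * (B + 2) ^ n * ∑ i ∈ Finset.range n, |w i - w' i|) := by linarith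
      _ ≤ 2 * (B + 2) ^ (n + 1) * |w n - w' n| +
        (B + 2) * (2 * (B + 2) ^ n * ∑ i ∈ Finset.range n, |w i - w' i|) := by linarith
      _ = _ := by ring

lemma ltm_sub_le (w w' : ℕ → ℝ) (B : ℝ) (hw : ∀ i, |w i| ≤ B) (hw' : ∀ i, |w' i| ≤ B)
    (n : ℕ) : ltm w n - ltm w' n ≤ 2 * (B + 2) ^ n * ∑ i ∈ Finset.range n, |w i - w' i| := by
  refine le_trans ?_ (matNorm_tm_sub_le w w' B hw hw' n)
  have h1 := one_le_matNorm_tm w n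
  have h2 := one_le_matNorm_tm w' n
  have h3 := matNorm_add_le (tm w n - tm w' n) (tm w' n)
  rw [sub_add_cancel] at h3
  unfold ltm
  rw [← Real.log_div (by linarith) (by linarith)]
  refine (Real.log_le_sub_one_of_pos (by positivity)).trans ?_
  rw [div_sub_one (by linarith), div_le_iff₀ (by linarith)]
  nlinarith [matNorm_nonneg (tm w n - tm w' n)]

lemma exists_shift (s a b : ℝ) : ∃ s', |s' - s| ≤ 2 ∧ |a| ≤ |s' * a + b| := by
  by_cases h : |a| ≤ |s * a + b|
  · exact ⟨s, by simp, h⟩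
  · refine ⟨s + 2, by simp, ?_⟩
    have : 2 * a = ((s + 2) * a + b) - (s * a + b) := by ring
    have h2 := abs_sub ((s + 2) * a + b) (s * a + b)
    rw [← this, abs_mul, abs_two] at h2
    push Not at h
    linarith

/-- Changing the two extreme values of `w` by at most `2` makes the continuant comparable with the
norm of the whole transfer matrix of `w`. -/
lemma exists_large_cont (w : ℕ → ℝ) (n : ℕ) : ∃ w' : ℕ → ℝ,
    (∀ i, i ≠ 0 → i ≠ n + 1 → w' i = w i) ∧ (∀ i, |w' i - w i| ≤ 2) ∧
      matNorm (tm w (n + 2)) ≤ 2 * |cont w' (n + 2)| := by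
  set m := max (max |tm w (n + 2) 0 0| |tm w (n + 2) 0 1|)
    (max |tm w (n + 2) 1 0| |tm w (n + 2) 1 1|) with hm
  have hnorm : matNorm (tm w (n + 2)) ≤ 2 * m := by
    have h0 : 0 ≤ m := (abs_nonneg _).trans ((le_max_left _ _).trans (le_max_left _ _))
    apply le_of_sq_le_sq _ (by linarith)
    have hs : ∀ z : ℝ, |z| ≤ m → z ^ 2 ≤ m ^ 2 := fun z hz => by
      rw [← sq_abs z]; exact pow_le_pow_left₀ (abs_nonneg _) hz 2
    have a1 := hs (tm w (n + 2) 0 0) ((le_max_left _ _).trans (le_max_left _ _))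
    have a2 := hs (tm w (n + 2) 0 1) ((le_max_right _ _).trans (le_max_left _ _))
    have a3 := hs (tm w (n + 2) 1 0) ((le_max_left _ _).trans (le_max_right _ _))
    have a4 := hs (tm w (n + 2) 1 1) ((le_max_right _ _).trans (le_max_right _ _))
    rw [matNorm_sq]; nlinarith
  -- an entry in the lower row is dominated after changing the last value
  have hrow : ∀ j, ∃ s', |s' - w (n + 1)| ≤ 2 ∧
      |tm w (n + 2) 1 j| ≤ |tm (Function.update w (n + 1) s') (n + 2) 0 j| := by
    intro j
    obtain ⟨s', h1, h2⟩ := exists_shift (w (n + 1)) (tm w (n + 1) 0 j) (- tm w (n + 1) 1 j)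
    refine ⟨s', h1, ?_⟩
    rw [tm_succ_one w (n + 1) j, tm_succ_zero (Function.update w (n + 1) s') (n + 1) j,
      Function.update_self,
      tm_congr (Function.update w (n + 1) s') w (n + 1)
        (fun i hi => Function.update_of_ne (by omega) _ _)]
    simpa [sub_eq_add_neg] using h2
  -- an entry in the right column is dominated after changing the first value
  have hcol : ∀ u : ℕ → ℝ, ∃ s', |s' - u 0| ≤ 2 ∧
      |tm u (n + 2) 0 1| ≤ |cont (Function.update u 0 s') (n + 2)| := by
    intro u
    obtain ⟨s', h1, h2⟩ := exists_shift (u 0) (tm (fun i => u (i + 1)) (n + 1) 0 0)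
      (tm (fun i => u (i + 1)) (n + 1) 0 1)
    refine ⟨s', h1, ?_⟩
    rw [cont, tm_succ_col_one u (n + 1) 0,
      tm_succ_col_zero (Function.update u 0 s') (n + 1) 0, abs_neg, Function.update_self]
    have : (fun i => Function.update u 0 s' (i + 1)) = fun i => u (i + 1) := by
      ext i; exact Function.update_of_ne (by omega) _ _
    rw [this]
    exact h2
  have hlast : ∀ j, m = |tm w (n + 2) 1 j| → ∃ u : ℕ → ℝ, (∀ i, i ≠ n + 1 → u i = w i) ∧
      |u (n + 1) - w (n + 1)| ≤ 2 ∧ m ≤ |tm u (n + 2) 0 j| := by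
    intro j hj
    obtain ⟨s', h1, h2⟩ := hrow j
    exact ⟨Function.update w (n + 1) s', fun i hi => Function.update_of_ne hi _ _,
      by simpa using h1, hj ▸ h2⟩
  have hrows : ∃ j, ∃ u : ℕ → ℝ, (∀ i, i ≠ n + 1 → u i = w i) ∧
      |u (n + 1) - w (n + 1)| ≤ 2 ∧ m ≤ |tm u (n + 2) 0 j| := by
    rcases max_choice (max |tm w (n + 2) 0 0| |tm w (n + 2) 0 1|)
      (max |tm w (n + 2) 1 0| |tm w (n + 2) 1 1|) with h | h <;> rw [← hm] at h
    · rcases max_choice |tm w (n + 2) 0 0| |tm w (n + 2) 0 1| with h' | h' <;> rw [h'] at h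
      · exact ⟨0, w, fun _ _ => rfl, by simp, h.le⟩
      · exact ⟨1, w, fun _ _ => rfl, by simp, h.le⟩
    · rcases max_choice |tm w (n + 2) 1 0| |tm w (n + 2) 1 1| with h' | h' <;> rw [h'] at h
      · exact ⟨0, hlast 0 h⟩
      · exact ⟨1, hlast 1 h⟩
  obtain ⟨j, u, hu1, hu2, hu3⟩ := hrows
  have hu4 : ∀ i, |u i - w i| ≤ 2 := by
    intro i
    by_cases hi : i = n + 1
    · rw [hi]; exact hu2
    · simp [hu1 i hi]
  fin_cases j
  · exact ⟨u, fun i _ hi => hu1 i hi, hu4, by simp only [cont]; simp at hu3; linarith⟩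
  · obtain ⟨s', h1, h2⟩ := hcol u
    refine ⟨Function.update u 0 s', fun i hi hi' => ?_, fun i => ?_, ?_⟩
    · rw [Function.update_of_ne hi, hu1 i hi']
    · by_cases hi : i = 0
      · rw [hi, Function.update_self, ← hu1 0 (by omega)]; exact h1
      · rw [Function.update_of_ne hi]; exact hu4 i
    · simp at hu3; linarith

/-! ### Convergents of the continued fraction -/

lemma gaussIter_irrational {α : ℝ} (hα : Irrational α) (k : ℕ) : Irrational (gaussIter α k) := by
  induction k with
  | zero =>
    rw [gaussIter, Int.fract]
    exact hα.sub_intCast _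
  | succ n ih =>
    rw [gaussIter, Int.fract, one_div]
    exact ih.inv.sub_intCast _

lemma gaussIter_pos {α : ℝ} (hα : Irrational α) (k : ℕ) : 0 < gaussIter α k := by
  refine lt_of_le_of_ne ?_ (gaussIter_irrational hα k).ne_zero.symm
  cases k <;> exact Int.fract_nonneg _

lemma gaussIter_lt_one (α : ℝ) (k : ℕ) : gaussIter α k < 1 := by
  cases k <;> exact Int.fract_lt_one _

lemma one_le_floor_gaussIter {α : ℝ} (hα : Irrational α) (k : ℕ) : 1 ≤ ⌊1 / gaussIter α k⌋ := by
  rw [Int.le_floor, Int.cast_one, le_div_iff₀ (gaussIter_pos hα k), one_mul]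
  exact (gaussIter_lt_one α k).le

lemma one_le_cfA {α : ℝ} (hα : Irrational α) (k : ℕ) : 1 ≤ cfA α k := by
  have := one_le_floor_gaussIter hα k
  rw [cfA]; omega

lemma gaussIter_mul_succ {α : ℝ} (hα : Irrational α) (k : ℕ) :
    gaussIter α k * gaussIter α (k + 1) = 1 - cfA α k * gaussIter α k := by
  have h1 : ((cfA α k : ℕ) : ℝ) = ((⌊1 / gaussIter α k⌋ : ℤ) : ℝ) := by
    have := one_le_floor_gaussIter hα k
    rw [cfA, ← Int.cast_natCast, Int.toNat_of_nonneg (by omega)]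
  rw [gaussIter, Int.fract, h1, mul_sub, mul_one_div_cancel (gaussIter_pos hα k).ne']
  ring

lemma cfDen_mono_pos {α : ℝ} (hα : Irrational α) (k : ℕ) :
    1 ≤ cfDen α k ∧ cfDen α k ≤ cfDen α (k + 1) := by
  induction k with
  | zero => exact ⟨le_rfl, one_le_cfA hα 0⟩
  | succ n ih =>
    refine ⟨ih.1.trans ih.2, ?_⟩
    show _ ≤ cfA α (n + 1) * cfDen α (n + 1) + cfDen α n
    have := Nat.le_mul_of_pos_left (cfDen α (n + 1)) (one_le_cfA hα (n + 1))
    omega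

/-- The denominators `q_k, q_{k+1}` come with numerators `p, p'` of determinant `±1` and with
approximation errors of opposite sign. -/
lemma exists_cfNum {α : ℝ} (hα : Irrational α) (k : ℕ) : ∃ p p' : ℤ,
    (p' * cfDen α k - p * cfDen α (k + 1)) ^ 2 = 1 ∧
      (cfDen α (k + 1) : ℝ) * α - p' = - gaussIter α (k + 1) * ((cfDen α k : ℝ) * α - p) := by
  induction k with
  | zero =>
    refine ⟨⌊α⌋, cfA α 0 * ⌊α⌋ + 1, ?_, ?_⟩
    · simp only [cfDen]; push_cast; ring
    · have h := gaussIter_mul_succ hα 0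
      have h0 : gaussIter α 0 = α - ⌊α⌋ := rfl
      simp only [cfDen]; push_cast
      rw [zero_add] at h
      rw [h0] at h
      linear_combination h
  | succ n ih =>
    obtain ⟨p, p', h1, h2⟩ := ih
    refine ⟨p', cfA α (n + 1) * p' + p, ?_, ?_⟩
    · rw [← h1]; simp only [cfDen]; push_cast; ring
    · have h := gaussIter_mul_succ hα (n + 1)
      have hg := (gaussIter_pos hα (n + 1)).ne'
      simp only [cfDen]; push_cast
      have h3 : (cfDen α n : ℝ) * α - p =
          - (((cfDen α (n + 1) : ℕ) : ℝ) * α - p') / gaussIter α (n + 1) := by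
        rw [h2]; field_simp
      have h4 : gaussIter α (n + 1 + 1) = 1 / gaussIter α (n + 1) - cfA α (n + 1) := by
        field_simp; linarith
      rw [h4]
      linear_combination h3

lemma exists_convergent {α : ℝ} (hα : Irrational α) (k : ℕ) : ∃ p : ℤ,
    IsCoprime p (cfDen α k : ℤ) ∧ (cfDen α k : ℝ) * |(cfDen α k : ℝ) * α - p| ≤ 1 := by
  obtain ⟨p, p', h1, h2⟩ := exists_cfNum hα k
  obtain ⟨hq, hqq⟩ := cfDen_mono_pos hα k
  refine ⟨p, ?_, ?_⟩
  · refine ⟨-(p' * cfDen α k - p * cfDen α (k + 1)) * cfDen α (k + 1),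
      (p' * cfDen α k - p * cfDen α (k + 1)) * p', ?_⟩
    linear_combination h1
  · set e := (cfDen α k : ℝ) * α - p with he
    have hd : ((cfDen α (k + 1) : ℝ) * e +
        (cfDen α k : ℝ) * (gaussIter α (k + 1) * e)) ^ 2 = 1 := by
      have h1' : (((p' : ℝ) * cfDen α k - p * cfDen α (k + 1)) ^ 2 : ℝ) = 1 := by
        exact_mod_cast h1
      rw [← h1', he]
      have h3 : gaussIter α (k + 1) * ((cfDen α k : ℝ) * α - p) =
        -((cfDen α (k + 1) : ℝ) * α - p') := by rw [h2]; ring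
      rw [h3]; ring
    have h5 : |((cfDen α (k + 1) : ℝ) + cfDen α k * gaussIter α (k + 1)) * e| = 1 := by
      rw [← abs_one, ← sq_eq_sq_iff_abs_eq_abs, one_pow, ← hd]; ring
    have hg := gaussIter_pos hα (k + 1)
    rw [abs_mul, abs_of_nonneg (by positivity)] at h5
    rw [← h5]
    have : (cfDen α k : ℝ) ≤ cfDen α (k + 1) := by exact_mod_cast hqq
    gcongr
    have : 0 ≤ (cfDen α k : ℝ) * gaussIter α (k + 1) := by positivity
    linarith

/-! ### Rational rotations and floor sums -/

lemma sum_periodic_coprime {q : ℕ} (hq : 0 < q) {p : ℤ} (hp : IsCoprime p (q : ℤ))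
    {β : Type*} [AddCommMonoid β] (φ : ℤ → β) (hφ : ∀ z, φ (z + q) = φ z) (c : ℤ) :
    ∑ i ∈ Finset.range q, φ ((i : ℤ) * p + c) = ∑ i ∈ Finset.range q, φ (i : ℤ) := by
  have hq' : (0 : ℤ) < q := by exact_mod_cast hq
  have hmod : ∀ z, φ (z % q) = φ z := by
    intro z
    have hper : Function.Periodic φ (q : ℤ) := hφ
    have := hper.sub_zsmul_eq (x := z) (z / q)
    rw [Int.emod_def, ← this, smul_eq_mul, mul_comm]
  have hinj : Set.InjOn (fun i : ℕ => (((i : ℤ) * p + c) % q).toNat) (Finset.range q) := by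
    intro i hi j hj hij
    simp only [Finset.coe_range, Set.mem_Iio] at hi hj
    have h1 := Int.emod_nonneg ((i : ℤ) * p + c) hq'.ne'
    have h2 := Int.emod_nonneg ((j : ℤ) * p + c) hq'.ne'
    have h3 : ((i : ℤ) * p + c) % q = ((j : ℤ) * p + c) % q := by
      simp only at hij; omega
    have h4 : (q : ℤ) ∣ ((i : ℤ) - j) * p := by
      have := (Int.ModEq.symm h3).dvd
      rwa [add_sub_add_right_eq_sub, ← sub_mul] at this
    have h5 : (q : ℤ) ∣ (i : ℤ) - j := hp.symm.dvd_of_dvd_mul_right h4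
    have := Int.eq_zero_of_abs_lt_dvd h5 (by rw [abs_lt]; constructor <;> omega)
    omega
  have hmaps : Set.MapsTo (fun i : ℕ => (((i : ℤ) * p + c) % q).toNat) (Finset.range q)
      (Finset.range q) := by
    intro i _
    have h1 := Int.emod_nonneg ((i : ℤ) * p + c) hq'.ne'
    have h2 := Int.emod_lt_of_pos ((i : ℤ) * p + c) hq'
    simp only [Finset.coe_range, Set.mem_Iio]; omega
  refine Finset.sum_nbij (fun i : ℕ => (((i : ℤ) * p + c) % q).toNat) hmaps hinj
    (Finset.surjOn_of_injOn_of_card_le _ hmaps hinj le_rfl) ?_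
  intro i _
  have h1 := Int.emod_nonneg ((i : ℤ) * p + c) hq'.ne'
  rw [Int.toNat_of_nonneg h1, hmod]

lemma sum_floor_step {q : ℕ} (hq : 0 < q) {p : ℤ} (hp : IsCoprime p (q : ℤ)) (w : ℝ) (s : ℕ) :
    ∑ i ∈ Finset.range q, (⌊w + ((i : ℝ) * p + s) / q⌋ - ⌊w + ((i : ℝ) * p) / q⌋) = s := by
  have hq0 : (q : ℝ) ≠ 0 := ne_of_gt (by exact_mod_cast hq)
  -- the case of a single step telescopes after reordering the orbit
  have one : ∀ w : ℝ, ∑ i ∈ Finset.range q,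
      (⌊w + ((i : ℝ) * p + 1) / q⌋ - ⌊w + ((i : ℝ) * p) / q⌋) = 1 := by
    intro w
    have h := sum_periodic_coprime hq hp
      (fun z : ℤ => ⌊w + ((z : ℝ) + 1) / q⌋ - ⌊w + (z : ℝ) / q⌋) (by
        intro z
        have e1 : w + (((z + q : ℤ) : ℝ) + 1) / q = w + ((z : ℝ) + 1) / q + 1 := by
          push_cast; field_simp; ring
        have e2 : w + ((z + q : ℤ) : ℝ) / q = w + (z : ℝ) / q + 1 := by
          push_cast; field_simp; ring
        rw [e1, e2, Int.floor_add_one, Int.floor_add_one]; ring) 0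
    simp only [add_zero, Int.cast_mul, Int.cast_natCast] at h
    rw [h]
    have h2 := Finset.sum_range_sub (fun i : ℕ => ⌊w + (i : ℝ) / q⌋) q
    simp only [Nat.cast_add, Nat.cast_one] at h2
    rw [h2, div_self hq0, Int.floor_add_one]; simp
  induction s generalizing w with
  | zero => simp
  | succ s ih =>
    have h1 := ih (w + 1 / q)
    have h2 := one w
    have h3 : ((s + 1 : ℕ) : ℤ) = 1 + s := by push_cast; ring
    rw [h3, ← h1, ← h2, ← Finset.sum_add_distrib]
    refine Finset.sum_congr rfl fun i _ => ?_
    have e1 : w + 1 / q + ((i : ℝ) * p + s) / q = w + ((i : ℝ) * p + (s + 1 : ℕ)) / q := by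
      push_cast; ring
    have e2 : w + 1 / q + ((i : ℝ) * p) / q = w + ((i : ℝ) * p + 1) / q := by ring
    rw [e1, e2]; push_cast; ring

/-- Two families of points that both stay within `s / q` to the right of the orbit of a rational
rotation have integer parts that differ in total by at most `s`. -/
lemma sum_abs_floor_sub_le {q : ℕ} (hq : 0 < q) {p : ℤ} (hp : IsCoprime p (q : ℤ)) (w : ℝ) (s : ℕ)
    (a b : ℕ → ℝ)
    (ha : ∀ i < q, w + ((i : ℝ) * p) / q ≤ a i ∧ a i ≤ w + ((i : ℝ) * p + s) / q)
    (hb : ∀ i < q, w + ((i : ℝ) * p) / q ≤ b i ∧ b i ≤ w + ((i : ℝ) * p + s) / q) :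
    ∑ i ∈ Finset.range q, |⌊a i⌋ - ⌊b i⌋| ≤ s := by
  rw [← sum_floor_step hq hp w s]
  refine Finset.sum_le_sum fun i hi => ?_
  rw [Finset.mem_range] at hi
  have h1 := Int.floor_mono (ha i hi).1
  have h2 := Int.floor_mono (ha i hi).2
  have h3 := Int.floor_mono (hb i hi).1
  have h4 := Int.floor_mono (hb i hi).2
  rw [abs_le]; constructor <;> omega

/-- `i α` and `i p / q` differ by at most `1 / q` for `i ≤ q` when `|q α - p| ≤ 1 / q`. -/
lemma abs_mul_sub_div_le {α : ℝ} {q : ℕ} (hq : 0 < q) {p : ℤ} (hp : (q : ℝ) * |(q : ℝ) * α - p| ≤ 1)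
    (i : ℕ) (hi : i ≤ q) : |(i : ℝ) * α - ((i : ℝ) * p) / q| ≤ 1 / q := by
  have hq0 : (0 : ℝ) < q := by exact_mod_cast hq
  have h1 : (i : ℝ) * α - ((i : ℝ) * p) / q = (i / q) * ((q : ℝ) * α - p) := by
    field_simp
  rw [h1, abs_mul, abs_of_nonneg (by positivity), le_div_iff₀ hq0]
  have h2 : (i : ℝ) / q ≤ 1 := by
    rw [div_le_one hq0]; exact_mod_cast hi
  calc (i : ℝ) / q * |(q : ℝ) * α - p| * q = (i : ℝ) / q * ((q : ℝ) * |(q : ℝ) * α - p|) := by ring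
    _ ≤ 1 * 1 := by gcongr
    _ = 1 := by ring

/-! ### Sawtooth potentials -/

/-- A `1`-periodic function with a single jump per period, which vanishes at `0` and whose
increments on `[0,1)` lie between `γm` and `γp` times the increment of the argument. -/
structure IsSawtooth (v : ℝ → ℝ) (γm γp : ℝ) : Prop where
  γm_pos : 0 < γm
  γp_pos : 0 < γp
  per : ∀ x, v (x + 1) = v x
  zero : v 0 = 0
  incr : ∀ x y : ℝ, 0 ≤ x → x ≤ y → y < 1 →
      γm * (y - x) ≤ v y - v x ∧ v y - v x ≤ γp * (y - x)

namespace IsSawtooth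

variable {v : ℝ → ℝ} {γm γp : ℝ}

lemma add_int (h : IsSawtooth v γm γp) (x : ℝ) (n : ℤ) : v (x + n) = v x := by
  have hper : Function.Periodic v 1 := h.per
  simpa using hper.int_mul n x

lemma fract (h : IsSawtooth v γm γp) (x : ℝ) : v (Int.fract x) = v x := by
  have := h.add_int x (-⌊x⌋)
  rw [← this]; push_cast; rfl

lemma abs_le (h : IsSawtooth v γm γp) (x : ℝ) : |v x| ≤ γp := by
  have h1 := h.incr 0 (Int.fract x) le_rfl (Int.fract_nonneg x) (Int.fract_lt_one x)
  rw [h.zero, h.fract, sub_zero, sub_zero] at h1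
  have h2 := mul_nonneg h.γm_pos.le (Int.fract_nonneg x)
  have h3 := mul_le_mul_of_nonneg_left (Int.fract_lt_one x).le h.γp_pos.le
  rw [abs_of_nonneg (by linarith)]; linarith

lemma lower (h : IsSawtooth v γm γp) {x y : ℝ} (hxy : x ≤ y) (hf : ⌊x⌋ = ⌊y⌋) :
    v x + γm * (y - x) ≤ v y := by
  have e : Int.fract y - Int.fract x = y - x := by simp only [Int.fract, hf]; ring
  have h1 := h.incr (Int.fract x) (Int.fract y) (Int.fract_nonneg x) (by linarith)
    (Int.fract_lt_one y)
  rw [h.fract, h.fract, e] at h1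
  linarith

lemma abs_sub_le (h : IsSawtooth v γm γp) (a b : ℝ) :
    |v a - v b| ≤ γp * (|a - b| + ((|⌊a⌋ - ⌊b⌋| : ℤ) : ℝ)) := by
  have key : ∀ a b : ℝ, Int.fract a ≤ Int.fract b → |v a - v b| ≤ γp * |Int.fract a - Int.fract b| := by
    intro a b hab
    have h1 := h.incr (Int.fract a) (Int.fract b) (Int.fract_nonneg a) hab (Int.fract_lt_one b)
    have h2 := mul_nonneg h.γm_pos.le (sub_nonneg.2 hab)
    rw [h.fract, h.fract] at h1
    rw [abs_of_nonpos (by linarith), abs_of_nonpos (by linarith)]; linarith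
  have h3 : |v a - v b| ≤ γp * |Int.fract a - Int.fract b| := by
    rcases le_total (Int.fract a) (Int.fract b) with hab | hab
    · exact key a b hab
    · rw [abs_sub_comm, abs_sub_comm (Int.fract a)]; exact key b a hab
  refine h3.trans (mul_le_mul_of_nonneg_left ?_ h.γp_pos.le)
  have e : Int.fract a - Int.fract b = (a - b) - ((⌊a⌋ : ℝ) - ⌊b⌋) := by
    simp only [Int.fract]; ring
  rw [e]; push_cast
  exact abs_sub _ _

lemma measurable (h : IsSawtooth v γm γp) : Measurable v := by
  have hm : Monotone fun x => v x + γp * (⌊x⌋ : ℝ) := by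
    intro x y hxy
    rcases (Int.floor_mono hxy).eq_or_lt with hf | hf
    · have := h.lower hxy hf
      have h2 := mul_nonneg h.γm_pos.le (sub_nonneg.2 hxy)
      simp only [hf]; linarith
    · have h1 := h.incr 0 (Int.fract y) le_rfl (Int.fract_nonneg y) (Int.fract_lt_one y)
      rw [h.zero, h.fract, sub_zero, sub_zero] at h1
      have h2 := mul_nonneg h.γm_pos.le (Int.fract_nonneg y)
      have h3 := (le_abs_self (v x)).trans (h.abs_le x)
      have h4 : ((⌊x⌋ : ℝ) + 1) ≤ ⌊y⌋ := by exact_mod_cast hf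
      have h5 := mul_le_mul_of_nonneg_left h4 h.γp_pos.le
      simp only; linarith
  have e : v = fun x => (v x + γp * (⌊x⌋ : ℝ)) - γp * (⌊x⌋ : ℝ) := by ext x; ring
  rw [e]
  have hfl : Measurable fun x : ℝ => (⌊x⌋ : ℝ) := by fun_prop
  exact hm.measurable.sub (hfl.const_mul _)

end IsSawtooth

/-! ### Eigenvalue counting for boxes of length `q` -/

/-- Eigenvalues of the Jacobi matrix with diagonal `λ v(a i) - E`, for arbitrary sampling
points `a i`. -/
def ptEigs (lam : ℝ) (v : ℝ → ℝ) (E : ℝ) (q : ℕ) (a : ℕ → ℝ) : Fin q → ℝ :=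
  eigs fun i : Fin q => lam * v (a i) - E

/-- Moving all sampling points to the right by at least `c` raises the spectrum by `λ γ₋ c`, up to
as many eigenvalues as there are crossings of the discontinuities. -/
lemma cntBelow_ptEigs_le {v : ℝ → ℝ} {γm γp lam : ℝ} (hv : IsSawtooth v γm γp) (hlam : 0 < lam)
    (E : ℝ) (q : ℕ) (a b : ℕ → ℝ) (c : ℝ) (hc : 0 ≤ c) (hab : ∀ i < q, b i + c ≤ a i) (t : ℝ) :
    (cntBelow (ptEigs lam v E q a) t : ℤ) ≤
      cntBelow (ptEigs lam v E q b) (t - lam * γm * c) +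
        ∑ i ∈ Finset.range q, |⌊a i⌋ - ⌊b i⌋| := by
  have h := cntBelow_eigs_mono (fun i : Fin q => lam * v (a i) - E)
    (fun i : Fin q => lam * v (b i) - E)
    (Finset.univ.filter fun i : Fin q => ⌊b i⌋ ≠ ⌊a i⌋) (lam * γm * c) t (by
      intro i hi
      simp only [Finset.mem_filter, Finset.mem_univ, true_and, not_not] at hi
      have h1 := hab i i.2
      have h2 := hv.lower (by linarith) hi
      have h3 := mul_le_mul_of_nonneg_left h2 hlam.le
      have h4 : γm * c ≤ γm * (a i - b i) :=
        mul_le_mul_of_nonneg_left (by linarith) hv.γm_pos.le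
      have h5 := mul_le_mul_of_nonneg_left h4 hlam.le
      linarith)
  have hS : ((Finset.univ.filter fun i : Fin q => ⌊b i⌋ ≠ ⌊a i⌋).card : ℤ) ≤
      ∑ i ∈ Finset.range q, |⌊a i⌋ - ⌊b i⌋| := by
    rw [Finset.sum_range (fun i => |⌊a i⌋ - ⌊b i⌋|), Finset.card_filter]
    push_cast
    refine Finset.sum_le_sum fun i _ => ?_
    split_ifs with hi
    · exact Int.one_le_abs (sub_ne_zero.2 (Ne.symm hi))
    · exact abs_nonneg _
  have h' : (cntBelow (ptEigs lam v E q a) t : ℤ) ≤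
      cntBelow (ptEigs lam v E q b) (t - lam * γm * c) +
        (Finset.univ.filter fun i : Fin q => ⌊b i⌋ ≠ ⌊a i⌋).card := by exact_mod_cast h
  linarith

/-- Eigenvalues of the box `[0, q - 1]` for the phase `y`. -/
def boxEigs (lam : ℝ) (v : ℝ → ℝ) (α E : ℝ) (q : ℕ) (y : ℝ) : Fin q → ℝ :=
  ptEigs lam v E q fun i => y + i * α

/-- The eigenvalue counting functions of any two phases differ by at most `9`: up to a cyclic shift
of the box, the two orbits of length `q` are `5 / q`-close. -/
lemma cntBelow_boxEigs_le {v : ℝ → ℝ} {γm γp lam : ℝ} (hv : IsSawtooth v γm γp) (hlam : 0 < lam)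
    (α E : ℝ) {q : ℕ} (hq : 0 < q) {p : ℤ} (hpq : IsCoprime p (q : ℤ))
    (hp : (q : ℝ) * |(q : ℝ) * α - p| ≤ 1) (x y t : ℝ) :
    cntBelow (boxEigs lam v α E q y) t ≤ cntBelow (boxEigs lam v α E q x) t + 9 := by
  have hq0 : (0 : ℝ) < q := by exact_mod_cast hq
  have hqz : (0 : ℤ) < q := by exact_mod_cast hq
  set z : ℤ := ⌈(q : ℝ) * (x - y)⌉ + 2 with hz
  -- `j` is chosen so that `j p ≡ z` modulo `q`
  obtain ⟨j, N, hj, hjN⟩ : ∃ j : ℕ, ∃ N : ℤ, j < q ∧ (j : ℤ) * p = z + q * N := by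
    obtain ⟨u, w, huw⟩ := hpq
    refine ⟨((z * u) % q).toNat, -(z * w) - p * (z * u / q), ?_, ?_⟩
    · have h1 := Int.emod_nonneg (z * u) hqz.ne'
      have h2 := Int.emod_lt_of_pos (z * u) hqz
      omega
    · rw [Int.toNat_of_nonneg (Int.emod_nonneg (z * u) hqz.ne'), Int.emod_def]
      linear_combination z * huw
  set e : ℝ := (q : ℝ) * α - p with he
  have hea : |e| ≤ 1 / q := by rw [le_div_iff₀ hq0, mul_comm]; exact hp
  have heb := abs_le.1 hea
  have hjz : ((j : ℝ) * p) / q = z / q + N := by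
    have : ((j : ℝ) * p) = z + q * N := by exact_mod_cast hjN
    rw [this]; field_simp
  have hzx : 2 / q ≤ y - x + z / q ∧ y - x + z / q ≤ 3 / q := by
    have h1 := Int.le_ceil ((q : ℝ) * (x - y))
    have h2 := Int.ceil_lt_add_one ((q : ℝ) * (x - y))
    have h3 : y - x + z / q = (z - (q : ℝ) * (x - y)) / q := by field_simp; ring
    rw [h3, div_le_div_iff_of_pos_right hq0, div_le_div_iff_of_pos_right hq0, hz]
    push_cast
    constructor <;> linarith
  have hja := abs_le.1 (abs_mul_sub_div_le hq hp j hj.le)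
  set θ : ℕ → ℤ := fun i => if i + j < q then 0 else 1 with hθ
  have hθ01 : ∀ i, (θ i : ℝ) = 0 ∨ (θ i : ℝ) = 1 := by
    intro i; simp only [hθ]; split_ifs <;> simp
  set a : ℕ → ℝ := fun i => y + ((i : ℝ) + j) * α - θ i * e - N with ha
  have hab : ∀ i, x + i * α ≤ a i ∧ a i ≤ x + i * α + 5 / q := by
    intro i
    have e1 : a i = x + i * α + (y - x + z / q) + (j * α - (j * p) / q) - θ i * e := by
      rw [hjz]; simp only [ha]; ring
    have e5 : (5 : ℝ) / q = 3 / q + 1 / q + 1 / q := by ring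
    have e2 : (2 : ℝ) / q = 1 / q + 1 / q := by ring
    have e0 : (0 : ℝ) ≤ 1 / q := by positivity
    rw [e1]
    rcases hθ01 i with h | h <;> rw [h] <;> constructor <;> linarith [hzx.1, hzx.2, hja.1, hja.2]
  have hshift : cntBelow (boxEigs lam v α E q y) t ≤ cntBelow (ptEigs lam v E q a) t + 2 := by
    obtain ⟨n, rfl⟩ : ∃ n, q = n + 1 := ⟨q - 1, by omega⟩
    have h := cntBelow_eigs_rotate (fun i : Fin (n + 1) => lam * v (y + ((i : ℕ) : ℝ) * α) - E)
      ⟨j, hj⟩ t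
    refine h.trans (le_of_eq ?_)
    rw [ptEigs]
    congr 3
    ext i
    congr 2
    have hi : (((i + ⟨j, hj⟩ : Fin (n + 1)) : ℕ) : ℝ) = (i : ℕ) + j - θ i * ((n + 1 : ℕ) : ℝ) := by
      rw [Fin.val_add]
      simp only [hθ]
      split_ifs with hlt
      · rw [Nat.mod_eq_of_lt hlt]; simp
      · push Not at hlt
        rw [Nat.mod_eq_sub_mod hlt, Nat.mod_eq_of_lt (by have := i.2; omega), Nat.cast_sub hlt]
        push_cast; ring
    have hpt : y + (((i + ⟨j, hj⟩ : Fin (n + 1)) : ℕ) : ℝ) * α = a i + ((N - θ i * p : ℤ) : ℝ) := by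
      rw [hi]; simp only [ha, he]; push_cast; ring
    rw [hpt, hv.add_int]
  have hcmp := cntBelow_ptEigs_le hv hlam E q a (fun i => x + i * α) 0 le_rfl
    (fun i _ => by simpa using (hab i).1) t
  have hsum := sum_abs_floor_sub_le hq hpq (x - 1 / q) 7 a (fun i => x + i * α)
    (by
      intro i hi
      have h1 := abs_le.1 (abs_mul_sub_div_le hq hp i hi.le)
      have h2 := hab i
      have e1 : ((i : ℝ) * p + (7 : ℕ)) / q = (i * p) / q + 1 / q + 1 / q + 5 / q := by
        push_cast; ring
      rw [e1]; constructor <;> linarith)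
    (by
      intro i hi
      have h1 := abs_le.1 (abs_mul_sub_div_le hq hp i hi.le)
      have e1 : ((i : ℝ) * p + (7 : ℕ)) / q = (i * p) / q + 1 / q + 1 / q + 5 / q := by
        push_cast; ring
      have e0 : (0 : ℝ) ≤ 5 / q := by positivity
      rw [e1]; constructor <;> linarith)
  rw [mul_zero, sub_zero] at hcmp
  have hfin : (cntBelow (ptEigs lam v E q a) t : ℤ) ≤ cntBelow (boxEigs lam v α E q x) t + 7 := by
    refine hcmp.trans ?_
    have : ((7 : ℕ) : ℤ) = 7 := rfl
    rw [boxEigs]; linarith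
  omega

lemma card_small_boxEigs_le {v : ℝ → ℝ} {γm γp lam : ℝ} (hv : IsSawtooth v γm γp) (hlam : 0 < lam)
    (α E : ℝ) {q : ℕ} (hq : 0 < q) {p : ℤ} (hpq : IsCoprime p (q : ℤ))
    (hp : (q : ℝ) * |(q : ℝ) * α - p| ≤ 1) (x ε : ℝ) (hε : ε ≤ lam * γm / q) :
    (Finset.univ.filter fun i => |boxEigs lam v α E q x i| < ε).card ≤ 13 := by
  have hq0 : (0 : ℝ) < q := by exact_mod_cast hq
  set r := lam * γm / q with hr
  have h1 := cntBelow_ptEigs_le hv hlam E q (fun i => x + i * α) (fun i => x - 2 / q + i * α)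
    (2 / q) (by positivity) (fun i _ => by linarith) r
  have hsum := sum_abs_floor_sub_le hq hpq (x - 3 / q) 4 (fun i => x + i * α)
    (fun i => x - 2 / q + i * α)
    (by
      intro i hi
      have h1 := abs_le.1 (abs_mul_sub_div_le hq hp i hi.le)
      have e1 : ((i : ℝ) * p + (4 : ℕ)) / q = (i * p) / q + 3 / q + 1 / q := by
        push_cast; ring
      have e3 : (3 : ℝ) / q = 2 / q + 1 / q := by ring
      have e0 : (0 : ℝ) ≤ 2 / q := by positivity
      rw [e1]; constructor <;> linarith)
    (by
      intro i hi
      have h1 := abs_le.1 (abs_mul_sub_div_le hq hp i hi.le)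
      have e1 : ((i : ℝ) * p + (4 : ℕ)) / q = (i * p) / q + 3 / q + 1 / q := by
        push_cast; ring
      have e3 : (3 : ℝ) / q = 2 / q + 1 / q := by ring
      have e0 : (0 : ℝ) ≤ 2 / q := by positivity
      rw [e1]; constructor <;> linarith)
  have e2 : r - lam * γm * (2 / q) = -r := by rw [hr]; ring
  rw [e2] at h1
  have h2 := cntBelow_boxEigs_le hv hlam α E hq hpq hp x (x - 2 / q) (-r)
  have h3 : (cntBelow (boxEigs lam v α E q x) r : ℤ) ≤
      cntBelow (boxEigs lam v α E q (x - 2 / q)) (-r) + 4 := by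
    refine h1.trans ?_
    have : ((4 : ℕ) : ℤ) = 4 := rfl
    rw [boxEigs]; linarith
  have hr0 : 0 < r := div_pos (mul_pos hlam hv.γm_pos) hq0
  have h4 : (Finset.univ.filter fun i => |boxEigs lam v α E q x i| < ε).card +
      cntBelow (boxEigs lam v α E q x) (-r) ≤ cntBelow (boxEigs lam v α E q x) r := by
    rw [cntBelow, cntBelow, ← Finset.card_union_of_disjoint]
    · refine Finset.card_le_card fun i hi => ?_
      simp only [Finset.mem_union, Finset.mem_filter, Finset.mem_univ, true_and] at hi ⊢
      rcases hi with hi | hi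
      · exact ((le_abs_self _).trans_lt hi).trans_le hε
      · linarith
    · rw [Finset.disjoint_left]
      intro i hi hi'
      simp only [Finset.mem_filter, Finset.mem_univ, true_and] at hi hi'
      have := (abs_lt.1 hi).1
      linarith
  omega

/-! ### The renormalised counting function and the pigeonhole argument -/

/-- Number of negative eigenvalues of the box at phase `y`, minus the number of discontinuities
crossed by the sampling points; this makes it antitone in `y`. -/
def rotCount (lam : ℝ) (v : ℝ → ℝ) (α E : ℝ) (q : ℕ) (y : ℝ) : ℤ :=
  cntBelow (boxEigs lam v α E q y) 0 - ∑ i ∈ Finset.range q, ⌊y + i * α⌋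

lemma cntBelow_mono {q : ℕ} (e : Fin q → ℝ) {s t : ℝ} (h : s ≤ t) : cntBelow e s ≤ cntBelow e t := by
  refine Finset.card_le_card fun i hi => ?_
  simp only [Finset.mem_filter, Finset.mem_univ, true_and] at hi ⊢
  linarith

lemma cntBelow_boxEigs_add_le {v : ℝ → ℝ} {γm γp lam : ℝ} (hv : IsSawtooth v γm γp) (hlam : 0 < lam)
    (α E : ℝ) (q : ℕ) (y c t : ℝ) (hc : 0 ≤ c) :
    (cntBelow (boxEigs lam v α E q (y + c)) t : ℤ) - ∑ i ∈ Finset.range q, ⌊y + c + i * α⌋ ≤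
      cntBelow (boxEigs lam v α E q y) (t - lam * γm * c) -
        ∑ i ∈ Finset.range q, ⌊y + i * α⌋ := by
  have h := cntBelow_ptEigs_le hv hlam E q (fun i => y + c + i * α) (fun i => y + i * α) c hc
    (fun i _ => by linarith) t
  have e : ∑ i ∈ Finset.range q, |⌊y + c + i * α⌋ - ⌊y + i * α⌋| =
      ∑ i ∈ Finset.range q, ⌊y + c + i * α⌋ - ∑ i ∈ Finset.range q, ⌊y + i * α⌋ := by
    rw [← Finset.sum_sub_distrib]
    refine Finset.sum_congr rfl fun i _ => abs_of_nonneg ?_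
    have := Int.floor_mono (show y + i * α ≤ y + c + i * α by linarith)
    omega
  rw [e] at h
  rw [boxEigs, boxEigs]; linarith

lemma rotCount_antitone {v : ℝ → ℝ} {γm γp lam : ℝ} (hv : IsSawtooth v γm γp) (hlam : 0 < lam)
    (α E : ℝ) (q : ℕ) : Antitone (rotCount lam v α E q) := by
  intro x y hxy
  have h := cntBelow_boxEigs_add_le hv hlam α E q x (y - x) 0 (by linarith)
  rw [show x + (y - x) = y by ring] at h
  refine h.trans ?_
  have h1 := cntBelow_mono (boxEigs lam v α E q x)
    (show 0 - lam * γm * (y - x) ≤ 0 by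
      have := mul_nonneg (mul_pos hlam hv.γm_pos).le (sub_nonneg.2 hxy); linarith)
  rw [rotCount]
  have : (cntBelow (boxEigs lam v α E q x) (0 - lam * γm * (y - x)) : ℤ) ≤
    cntBelow (boxEigs lam v α E q x) 0 := by exact_mod_cast h1
  linarith

lemma rotCount_add_int {v : ℝ → ℝ} {γm γp lam : ℝ} (hv : IsSawtooth v γm γp)
    (α E : ℝ) (q : ℕ) (y : ℝ) (k : ℤ) :
    rotCount lam v α E q (y + k) = rotCount lam v α E q y - q * k := by
  have h1 : boxEigs lam v α E q (y + k) = boxEigs lam v α E q y := by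
    simp only [boxEigs, ptEigs]
    congr 1
    ext i
    rw [show y + (k : ℝ) + (i : ℕ) * α = y + (i : ℕ) * α + k by ring, hv.add_int]
  have h2 : ∀ i : ℕ, ⌊y + (k : ℝ) + i * α⌋ = ⌊y + i * α⌋ + k := by
    intro i
    rw [show y + (k : ℝ) + i * α = y + i * α + k by ring, Int.floor_add_intCast]
  simp only [rotCount, h1, h2, Finset.sum_add_distrib, Finset.sum_const, Finset.card_range]
  simp; ring

/-- An eigenvalue close to `0` forces the counting function to drop nearby. -/
lemma rotCount_drop {v : ℝ → ℝ} {γm γp lam : ℝ} (hv : IsSawtooth v γm γp) (hlam : 0 < lam)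
    (α E : ℝ) (q : ℕ) (y s : ℝ) (hs : 0 < s) (j : Fin q)
    (hj : |boxEigs lam v α E q y j| < lam * γm * s) :
    rotCount lam v α E q (y + s) < rotCount lam v α E q (y - s) := by
  have h1 := cntBelow_boxEigs_add_le hv hlam α E q y s 0 hs.le
  have h2 := cntBelow_boxEigs_add_le hv hlam α E q (y - s) s (lam * γm * s) hs.le
  rw [sub_add_cancel, sub_self] at h2
  rw [zero_sub] at h1
  have hj' := abs_lt.1 hj
  have h3 : cntBelow (boxEigs lam v α E q y) (-(lam * γm * s)) <
      cntBelow (boxEigs lam v α E q y) (lam * γm * s) := by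
    refine Finset.card_lt_card (Finset.ssubset_iff_of_subset ?_ |>.2 ⟨j, ?_, ?_⟩)
    · intro i hi
      simp only [Finset.mem_filter, Finset.mem_univ, true_and] at hi ⊢
      linarith [hj'.1, hj'.2]
    · simpa using hj'.2
    · simpa using hj'.1.le
  rw [rotCount, rotCount]
  omega

/-- More than `q` phases of the orbit cannot all have an almost-zero eigenvalue unless two of them
are close modulo `1`. -/
lemma exists_close_pair {v : ℝ → ℝ} {γm γp lam : ℝ} (hv : IsSawtooth v γm γp) (hlam : 0 < lam)
    (α E : ℝ) {q : ℕ} (hq : 0 < q) (x s : ℝ) (hs : 0 < s) (A : Finset ℤ) (hA : q < A.card)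
    (h : ∀ a ∈ A, ∃ j, |boxEigs lam v α E q (x + a * α) j| < lam * γm * s) :
    ∃ a ∈ A, ∃ b ∈ A, a ≠ b ∧ distInt (((a - b : ℤ) : ℝ) * α) ≤ 2 * s := by
  have hqz : (0 : ℤ) < q := by exact_mod_cast hq
  set F := rotCount lam v α E q with hF
  have hanti : Antitone F := rotCount_antitone hv hlam α E q
  obtain ⟨a, ha, b, hb, hab, hmod⟩ := Finset.exists_ne_map_eq_of_card_lt_of_maps_to
    (s := A) (t := Finset.Ico (0 : ℤ) q) (by simpa using hA)
    (f := fun a => F (x + a * α - s) % q) (by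
      intro a _
      simp only [Finset.coe_Ico, Set.mem_Ico]
      exact ⟨Int.emod_nonneg _ hqz.ne', Int.emod_lt_of_pos _ hqz⟩)
  refine ⟨a, ha, b, hb, hab, ?_⟩
  obtain ⟨k, hk⟩ : (q : ℤ) ∣ F (x + a * α - s) - F (x + b * α - s) :=
    (Int.ModEq.symm hmod).dvd
  have hper : ∀ y : ℝ, F (y + (-k : ℤ)) = F y + q * k := fun y => by
    rw [hF, rotCount_add_int hv]; ring
  have hda : F (x + a * α + s) < F (x + a * α - s) := by
    obtain ⟨j, hj⟩ := h a ha; exact rotCount_drop hv hlam α E q _ s hs j hj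
  have hdb : F (x + b * α + s) < F (x + b * α - s) := by
    obtain ⟨j, hj⟩ := h b hb; exact rotCount_drop hv hlam α E q _ s hs j hj
  have h1 := hper (x + b * α + s)
  have h2 := hper (x + b * α - s)
  have c1 : x + b * α - s + (-k : ℤ) < x + a * α + s := by
    by_contra hc
    push Not at hc
    have := hanti hc
    linarith
  have c2 : x + a * α - s < x + b * α + s + (-k : ℤ) := by
    by_contra hc
    push Not at hc
    have := hanti hc
    linarith
  refine (round_le _ (-k)).trans ?_
  push_cast at c1 c2 ⊢
  rw [abs_le]; constructor <;> linarith

/-! ### Uniform upper bound for the transfer matrices -/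

/-- The sequence `E - λ v(x + lα)` entering the transfer matrices. -/
def enPot (lam : ℝ) (v : ℝ → ℝ) (α E x : ℝ) : ℕ → ℝ := fun l => E - lam * v (x + l * α)

lemma lyap_eq (lam : ℝ) (v : ℝ → ℝ) (α E : ℝ) :
    lyap lam v α E = ⨅ n : ℕ+, (1 / (n : ℝ)) * ∫ x in (0:ℝ)..1, ltm (enPot lam v α E x) n := by
  simp only [lyap, transferMat_eq_tm]; rfl

lemma abs_enPot_le {v : ℝ → ℝ} {γm γp lam : ℝ} (hv : IsSawtooth v γm γp) (hlam : 0 < lam)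
    (α E x : ℝ) (l : ℕ) : |enPot lam v α E x l| ≤ |E| + lam * γp := by
  refine (abs_sub _ _).trans ?_
  rw [abs_mul, abs_of_pos hlam]
  have := mul_le_mul_of_nonneg_left (hv.abs_le (x + l * α)) hlam.le
  linarith

lemma enPot_add (lam : ℝ) (v : ℝ → ℝ) (α E x : ℝ) (l i : ℕ) :
    enPot lam v α E x (l + i) = enPot lam v α E (x + l * α) i := by
  simp only [enPot]; push_cast; congr 3; ring

lemma enPot_add_one {v : ℝ → ℝ} {γm γp lam : ℝ} (hv : IsSawtooth v γm γp)
    (α E x : ℝ) : enPot lam v α E (x + 1) = enPot lam v α E x := by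
  ext l
  simp only [enPot]
  rw [show x + 1 + l * α = x + l * α + 1 by ring, hv.per]

lemma measurable_ltm {v : ℝ → ℝ} {γm γp lam : ℝ} (hv : IsSawtooth v γm γp)
    (α E : ℝ) (n : ℕ) : Measurable fun x => ltm (enPot lam v α E x) n := by
  have hw : ∀ l, Measurable fun x => enPot lam v α E x l := by
    intro l
    have := hv.measurable.comp (measurable_id.add_const ((l : ℝ) * α))
    exact (this.const_mul lam).const_sub E
  have htm : ∀ n i j, Measurable fun x => tm (enPot lam v α E x) n i j := by
    intro n
    induction n with
    | zero => intro i j; simp only [tm]; exact measurable_const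
    | succ n ih =>
      intro i j
      fin_cases i
      · simp only [Fin.zero_eta, tm_succ_zero]
        exact ((hw n).mul (ih 0 j)).sub (ih 1 j)
      · simp only [Fin.mk_one, tm_succ_one]
        exact ih 0 j
  simp only [ltm, matNorm]
  refine Real.measurable_log.comp (Real.continuous_sqrt.measurable.comp ?_)
  exact Finset.measurable_fun_sum _ fun i _ => Finset.measurable_fun_sum _ fun j _ =>
    (htm n i j).pow_const 2

lemma intervalIntegrable_ltm {v : ℝ → ℝ} {γm γp lam : ℝ} (hv : IsSawtooth v γm γp)
    (hlam : 0 < lam) (α E : ℝ) (n : ℕ) (a b : ℝ) :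
    IntervalIntegrable (fun x => ltm (enPot lam v α E x) n) volume a b := by
  rw [intervalIntegrable_iff]
  refine Measure.integrableOn_of_bounded (M := Real.log 2 + n * Real.log (|E| + lam * γp + 2))
    (by simp) (measurable_ltm hv α E n).aestronglyMeasurable (ae_of_all _ fun x => ?_)
  rw [Real.norm_eq_abs, abs_of_nonneg (ltm_nonneg _ _)]
  exact ltm_le_of_bound _ _ (abs_enPot_le hv hlam α E x) n n le_rfl

lemma lyap_le {v : ℝ → ℝ} (lam α E : ℝ) (n : ℕ) (hn : 0 < n) :
    n * lyap lam v α E ≤ ∫ x in (0:ℝ)..1, ltm (enPot lam v α E x) n := by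
  have hb : BddBelow (Set.range fun n : ℕ+ =>
      (1 / (n : ℝ)) * ∫ x in (0:ℝ)..1, ltm (enPot lam v α E x) n) := by
    refine ⟨0, ?_⟩
    rintro _ ⟨n, rfl⟩
    have : 0 ≤ ∫ x in (0:ℝ)..1, ltm (enPot lam v α E x) n :=
      intervalIntegral.integral_nonneg zero_le_one fun x _ => ltm_nonneg _ _
    positivity
  have h := ciInf_le hb ⟨n, hn⟩
  rw [← lyap_eq] at h
  have hn0 : (0 : ℝ) < n := by exact_mod_cast hn
  simp only [PNat.mk_coe] at h
  calc n * lyap lam v α E ≤ n * (1 / (n : ℝ) * ∫ x in (0:ℝ)..1, ltm (enPot lam v α E x) n) := by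
        gcongr
    _ = _ := by field_simp

/-- A Denjoy–Koksma estimate for `ln ‖M_n‖` along an orbit of the length of a convergent's
denominator; the error constant does not depend on that denominator. -/
lemma sum_ltm_orbit_le {v : ℝ → ℝ} {γm γp lam : ℝ} (hv : IsSawtooth v γm γp) (hlam : 0 < lam)
    (α E : ℝ) (n₀ : ℕ) {q : ℕ} (hq : 0 < q) {p : ℤ} (hpq : IsCoprime p (q : ℤ))
    (hp : (q : ℝ) * |(q : ℝ) * α - p| ≤ 1) (x : ℝ) :
    ∑ l ∈ Finset.range q, ltm (enPot lam v α E (x + l * α)) n₀ ≤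
      q * (∫ y in (0:ℝ)..1, ltm (enPot lam v α E y) n₀) +
        2 * (|E| + lam * γp + 2) ^ n₀ * (n₀ * (lam * (γp * 4))) := by
  have hq0 : (0 : ℝ) < q := by exact_mod_cast hq
  set f : ℝ → ℝ := fun y => ltm (enPot lam v α E y) n₀ with hf
  set L : ℝ := 2 * (|E| + lam * γp + 2) ^ n₀ with hL
  have hL0 : 0 ≤ L := by
    have := mul_pos hlam hv.γp_pos
    positivity
  have hper : Function.Periodic f 1 := fun y => by simp only [hf, enPot_add_one hv]
  -- comparison with the rational orbit through an arbitrary point `y`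
  have key : ∀ y : ℝ, ∑ l ∈ Finset.range q, f (x + l * α) ≤
      (∑ l ∈ Finset.range q, f (y + l / q)) + L * (n₀ * (lam * (γp * 4))) := by
    intro y
    set m : ℤ := ⌊(q : ℝ) * (y - x)⌋ with hm
    have hord := sum_periodic_coprime hq hpq (fun z : ℤ => f (y + (z : ℝ) / q)) (by
      intro z
      have : y + ((z + q : ℤ) : ℝ) / q = y + (z : ℝ) / q + 1 := by push_cast; field_simp; ring
      simp only [this]; exact hper _) (-m)
    simp only [Int.cast_natCast] at hord
    rw [← hord, ← sub_le_iff_le_add', ← Finset.sum_sub_distrib]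
    set b : ℕ → ℝ := fun l => y + (((l : ℤ) * p + -m : ℤ) : ℝ) / q with hb
    have hbl : ∀ l : ℕ, x + (l * p) / q ≤ b l ∧ b l ≤ x + (l * p) / q + 1 / q := by
      intro l
      have h1 := Int.floor_le ((q : ℝ) * (y - x))
      have h2 := (Int.lt_floor_add_one ((q : ℝ) * (y - x))).le
      have e1 : b l = x + (l * p) / q + ((q : ℝ) * (y - x) - m) / q := by
        simp only [hb]; push_cast; field_simp; ring
      have h3 : 0 ≤ ((q : ℝ) * (y - x) - m) / q := div_nonneg (by linarith) hq0.le
      have h4 : ((q : ℝ) * (y - x) - m) / q ≤ 1 / q :=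
        div_le_div_of_nonneg_right (by linarith) hq0.le
      rw [e1]; constructor <;> linarith
    have hstep : ∀ l ∈ Finset.range q, f (x + l * α) - f (b l) ≤
        L * ∑ i ∈ Finset.range n₀, lam * |v (x + l * α + i * α) - v (b l + i * α)| := by
      intro l _
      refine (ltm_sub_le _ _ _ (abs_enPot_le hv hlam α E (x + l * α))
        (abs_enPot_le hv hlam α E (b l)) n₀).trans (le_of_eq ?_)
      congr 1
      refine Finset.sum_congr rfl fun i _ => ?_
      simp only [enPot]
      rw [show E - lam * v (x + l * α + i * α) - (E - lam * v (b l + i * α)) =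
        lam * -(v (x + l * α + i * α) - v (b l + i * α)) by ring, abs_mul, abs_neg, abs_of_pos hlam]
    refine (Finset.sum_le_sum hstep).trans ?_
    rw [← Finset.mul_sum, Finset.sum_comm]
    refine mul_le_mul_of_nonneg_left ?_ hL0
    have hi : ∀ i ∈ Finset.range n₀, ∑ l ∈ Finset.range q,
        lam * |v (x + l * α + i * α) - v (b l + i * α)| ≤ lam * (γp * 4) := by
      intro i _
      rw [← Finset.mul_sum]
      refine mul_le_mul_of_nonneg_left ?_ hlam.le
      refine (Finset.sum_le_sum fun l _ => hv.abs_sub_le _ _).trans ?_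
      rw [← Finset.mul_sum, Finset.sum_add_distrib]
      refine mul_le_mul_of_nonneg_left ?_ hv.γp_pos.le
      have e2 : (2 : ℝ) / q = 1 / q + 1 / q := by ring
      have e0 : (0 : ℝ) ≤ 1 / q := by positivity
      have s1 : ∑ l ∈ Finset.range q, |x + l * α + i * α - (b l + i * α)| ≤ 2 := by
        calc ∑ l ∈ Finset.range q, |x + l * α + i * α - (b l + i * α)|
            ≤ ∑ l ∈ Finset.range q, (2 : ℝ) / q := by
              refine Finset.sum_le_sum fun l hl => ?_
              have h1 := abs_le.1 (abs_mul_sub_div_le hq hp l (Finset.mem_range.1 hl).le)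
              have h2 := hbl l
              rw [abs_le, e2]; constructor <;> linarith
          _ = 2 := by rw [Finset.sum_const, Finset.card_range, nsmul_eq_mul]; field_simp
      have s2 := sum_abs_floor_sub_le hq hpq (x + i * α - 1 / q) 2 (fun l => x + l * α + i * α)
        (fun l => b l + i * α)
        (by
          intro l hl
          have h1 := abs_le.1 (abs_mul_sub_div_le hq hp l hl.le)
          have e1 : ((l : ℝ) * p + (2 : ℕ)) / q = (l * p) / q + 1 / q + 1 / q := by
            push_cast; ring
          rw [e1]; constructor <;> linarith)
        (by
          intro l hl
          have h2 := hbl l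
          have e1 : ((l : ℝ) * p + (2 : ℕ)) / q = (l * p) / q + 1 / q + 1 / q := by
            push_cast; ring
          rw [e1]; constructor <;> linarith)
      have s3 : ∑ l ∈ Finset.range q,
          ((|⌊x + l * α + i * α⌋ - ⌊b l + i * α⌋| : ℤ) : ℝ) ≤ 2 := by
        exact_mod_cast s2
      linarith
    refine (Finset.sum_le_sum hi).trans (le_of_eq ?_)
    rw [Finset.sum_const, Finset.card_range, nsmul_eq_mul]
  have hIntble : ∀ c : ℝ, IntervalIntegrable (fun y => f (y + c)) volume 0 1 := fun c => by
    have := (intervalIntegrable_ltm hv hlam α E n₀ (0 + c) (1 + c)).comp_add_right c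
    simpa using this
  have hI : ∀ c : ℝ, ∫ y in (0:ℝ)..1, f (y + c) = ∫ y in (0:ℝ)..1, f y := fun c => by
    rw [intervalIntegral.integral_comp_add_right]
    have := hper.intervalIntegral_add_eq (0 + c) 0
    rw [zero_add, zero_add] at this
    rw [zero_add, add_comm 1 c, this]
  have hsum : IntervalIntegrable (fun y => ∑ l ∈ Finset.range q, f (y + l / q)) volume 0 1 := by
    have := IntervalIntegrable.sum (Finset.range q) (f := fun (l : ℕ) y => f (y + l / q))
      fun l _ => hIntble _
    rwa [Finset.sum_fn] at this
  have hmono := intervalIntegral.integral_mono_on (μ := volume) (zero_le_one (α := ℝ))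
    (f := fun _ => ∑ l ∈ Finset.range q, f (x + l * α))
    (g := fun y => (∑ l ∈ Finset.range q, f (y + l / q)) + L * (n₀ * (lam * (γp * 4))))
    intervalIntegrable_const
    (hsum.add intervalIntegrable_const)
    (fun y _ => key y)
  rw [intervalIntegral.integral_add hsum intervalIntegrable_const,
    intervalIntegral.integral_finsetSum fun l _ => hIntble _] at hmono
  simpa [hI] using hmono

lemma sum_ltm_orbit_le_of_length {v : ℝ → ℝ} {lam : ℝ} (α E : ℝ) (n₀ : ℕ) {q : ℕ} (hq : 0 < q) {I C₁ M : ℝ} (hI : 0 ≤ I)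
    (hC₁ : 0 ≤ C₁)
    (hM : ∀ x, ltm (enPot lam v α E x) n₀ ≤ M)
    (hbl : ∀ x, ∑ l ∈ Finset.range q, ltm (enPot lam v α E (x + l * α)) n₀ ≤ q * I + C₁)
    (n : ℕ) (x : ℝ) :
    ∑ l ∈ Finset.range n, ltm (enPot lam v α E (x + l * α)) n₀ ≤ n * (I + C₁ / q) + q * M := by
  have hq0 : (0 : ℝ) < q := by exact_mod_cast hq
  have hM0 : 0 ≤ M := (ltm_nonneg _ _).trans (hM 0)
  induction n using Nat.strong_induction_on generalizing x with
  | _ n ih =>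
    rcases lt_or_ge n q with h | h
    · have h1 : ∑ l ∈ Finset.range n, ltm (enPot lam v α E (x + l * α)) n₀ ≤ n * M := by
        refine (Finset.sum_le_sum fun l _ => hM _).trans (le_of_eq ?_)
        rw [Finset.sum_const, Finset.card_range, nsmul_eq_mul]
      have h2 : (n : ℝ) ≤ q := by exact_mod_cast h.le
      have h3 : (n : ℝ) * M ≤ q * M := by gcongr
      have h4 : 0 ≤ (n : ℝ) * (I + C₁ / q) := by positivity
      linarith
    · obtain ⟨r, rfl⟩ := Nat.exists_eq_add_of_le h
      have h1 := ih r (by omega) (x + q * α)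
      have h2 := hbl x
      rw [Finset.sum_range_add]
      have h3 : ∀ l : ℕ, x + ((q + l : ℕ) : ℝ) * α = x + q * α + l * α := by
        intro l; push_cast; ring
      simp only [h3]
      have h4 : ((q + r : ℕ) : ℝ) * (I + C₁ / q) = q * I + C₁ + r * (I + C₁ / q) := by
        push_cast; field_simp
      rw [h4]; linarith

lemma le_cfDen {α : ℝ} (hα : Irrational α) (k : ℕ) : k ≤ cfDen α k := by
  have : ∀ k, k + 1 ≤ cfDen α (k + 1) := by
    intro k
    induction k with
    | zero => exact (cfDen_mono_pos hα 1).1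
    | succ n ih =>
      show _ ≤ cfA α (n + 1) * cfDen α (n + 1) + cfDen α n
      have h1 := Nat.le_mul_of_pos_left (cfDen α (n + 1)) (one_le_cfA hα (n + 1))
      have h2 := (cfDen_mono_pos hα n).1
      omega
  cases k with
  | zero => exact Nat.zero_le _
  | succ k => exact this k

/-- Unique ergodicity makes the upper bound by the Lyapunov exponent uniform in the phase. -/
lemma eventually_ltm_le {v : ℝ → ℝ} {γm γp lam : ℝ} (hv : IsSawtooth v γm γp) (hlam : 0 < lam)
    {α : ℝ} (hα : Irrational α) (E ε : ℝ) (hε : 0 < ε) :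
    ∃ N : ℕ, ∀ n ≥ N, ∀ x, ltm (enPot lam v α E x) n ≤ n * (lyap lam v α E + ε) := by
  obtain ⟨n₀, hn₀⟩ : ∃ n₀ : ℕ+, (1 / (n₀ : ℝ)) *
      (∫ x in (0:ℝ)..1, ltm (enPot lam v α E x) n₀) < lyap lam v α E + ε / 3 := by
    refine exists_lt_of_ciInf_lt ?_
    rw [← lyap_eq]; linarith
  have hn0 : (0 : ℝ) < (n₀ : ℕ) := by exact_mod_cast n₀.pos
  set I := ∫ x in (0:ℝ)..1, ltm (enPot lam v α E x) n₀ with hI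
  have hI0 : 0 ≤ I := intervalIntegral.integral_nonneg zero_le_one fun x _ => ltm_nonneg _ _
  set B := |E| + lam * γp with hB
  have hB0 : 0 ≤ B := by
    have := mul_pos hlam hv.γp_pos
    positivity
  set C₁ := 2 * (B + 2) ^ (n₀ : ℕ) * ((n₀ : ℕ) * (lam * (γp * 4))) with hC₁
  have hC0 : 0 ≤ C₁ := by
    have := hv.γp_pos
    positivity
  set M := Real.log 2 + (n₀ : ℕ) * Real.log (B + 2) with hM
  have hMle : ∀ x, ltm (enPot lam v α E x) n₀ ≤ M := fun x =>
    ltm_le_of_bound _ _ (abs_enPot_le hv hlam α E x) n₀ n₀ le_rfl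
  obtain ⟨k, hk⟩ := exists_nat_gt (3 * C₁ / ε)
  set q := cfDen α k with hq
  have hqpos : 0 < q := (cfDen_mono_pos hα k).1
  have hq0 : (0 : ℝ) < q := by exact_mod_cast hqpos
  have hqC : C₁ / q ≤ ε / 3 := by
    have h1 : (k : ℝ) ≤ q := by exact_mod_cast le_cfDen hα k
    have h2 : 3 * C₁ / ε < q := hk.trans_le h1
    rw [div_lt_iff₀ hε] at h2
    rw [div_le_iff₀ hq0]; linarith
  obtain ⟨p, hpq, hp⟩ := exists_convergent hα k
  obtain ⟨N, hN⟩ := exists_nat_gt (3 * (q * M + (n₀ : ℕ) * (3 * M)) / ε)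
  refine ⟨N, fun n hn x => ?_⟩
  have h1 := ltm_average (enPot lam v α E x) B (abs_enPot_le hv hlam α E x) n₀ n n₀.pos
  have h2 := sum_ltm_orbit_le_of_length α E n₀ hqpos hI0 hC0 hMle
    (fun x => sum_ltm_orbit_le hv hlam α E n₀ hqpos hpq hp x) n x
  have e : ∀ l : ℕ, (fun i => enPot lam v α E x (l + i)) = enPot lam v α E (x + l * α) :=
    fun l => funext fun i => enPot_add lam v α E x l i
  simp only [e] at h1
  have h3 : q * M + (n₀ : ℕ) * (3 * M) ≤ n * (ε / 3) := by
    have : (N : ℝ) ≤ n := by exact_mod_cast hn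
    have h5 := hN.trans_le this
    rw [div_lt_iff₀ hε] at h5
    linarith
  have h4 : I ≤ (n₀ : ℕ) * (lyap lam v α E + ε / 3) := by
    have := mul_le_mul_of_nonneg_left hn₀.le hn0.le
    rwa [← mul_assoc, mul_one_div_cancel hn0.ne', one_mul] at this
  have hn1 : (1 : ℝ) ≤ (n₀ : ℕ) := by exact_mod_cast n₀.pos
  have h6 : (n : ℝ) * (I + C₁ / q) ≤ n * ((n₀ : ℕ) * (lyap lam v α E + ε / 3) + ε / 3) := by
    gcongr
  have h7 : (n : ℝ) * (ε / 3) ≤ (n₀ : ℕ) * (n * (ε / 3)) :=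
    le_mul_of_one_le_left (by positivity) hn1
  have h8 : ((n₀ : ℕ) : ℝ) * ltm (enPot lam v α E x) n ≤
      (n₀ : ℕ) * (n * (lyap lam v α E + ε)) := by
    calc ((n₀ : ℕ) : ℝ) * ltm (enPot lam v α E x) n
        ≤ n * ((n₀ : ℕ) * (lyap lam v α E + ε / 3) + ε / 3) + n * (ε / 3) := by linarith
      _ ≤ (n₀ : ℕ) * (n * (lyap lam v α E + ε / 3)) + (n₀ : ℕ) * (n * (ε / 3)) +
          (n₀ : ℕ) * (n * (ε / 3)) := by linarith
      _ = _ := by ring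
  exact le_of_mul_le_mul_left h8 hn0

lemma exists_le_ltm {v : ℝ → ℝ} {γm γp lam : ℝ} (hv : IsSawtooth v γm γp) (hlam : 0 < lam)
    (α E ε : ℝ) (hε : 0 < ε) (n : ℕ) (hn : 0 < n) :
    ∃ x, n * (lyap lam v α E - ε) ≤ ltm (enPot lam v α E x) n := by
  by_contra hc
  push Not at hc
  have hn0 : (0 : ℝ) < n := by exact_mod_cast hn
  have h1 := intervalIntegral.integral_mono_on (μ := volume) (zero_le_one (α := ℝ))
    (intervalIntegrable_ltm hv hlam α E n 0 1)
    (intervalIntegrable_const (c := n * (lyap lam v α E - ε))) (fun x _ => (hc x).le)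
  have h2 := lyap_le (v := v) lam α E n hn
  simp at h1
  have := mul_pos hn0 hε
  linarith

/-! ### A small determinant forces a small eigenvalue -/

/-- The diagonal `λ v(y + iα) - E` of the box at phase `y`. -/
def boxDiag (lam : ℝ) (v : ℝ → ℝ) (α E y : ℝ) : ℕ → ℝ := fun i => lam * v (y + i * α) - E

lemma boxDiag_eq (lam : ℝ) (v : ℝ → ℝ) (α E y : ℝ) :
    boxDiag lam v α E y = fun i => -enPot lam v α E y i := by
  ext i; simp [boxDiag, enPot]

lemma abs_cont_boxDiag_le (lam : ℝ) (v : ℝ → ℝ) (α E y : ℝ) (n : ℕ) :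
    |cont (boxDiag lam v α E y) n| ≤ Real.exp (ltm (enPot lam v α E y) n) := by
  have h := one_le_matNorm_tm (enPot lam v α E y) n
  rw [boxDiag_eq, abs_cont_neg, ltm, Real.exp_log (by linarith)]
  exact abs_entry_le_matNorm _

lemma abs_boxDiag_le {v : ℝ → ℝ} {γm γp lam : ℝ} (hv : IsSawtooth v γm γp) (hlam : 0 < lam)
    (α E y : ℝ) (i : ℕ) : |boxDiag lam v α E y i| ≤ |E| + lam * γp := by
  rw [boxDiag_eq, abs_neg]; exact abs_enPot_le hv hlam α E y i

/-- If the transfer matrix at some phase `z` is large while the determinant of the box at phase `y`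
is small, then the box at `y` has a small eigenvalue: the spectra at `y` and at (a perturbation of)
`z` have almost the same counting function, and only boundedly many eigenvalues are small. -/
lemma exists_small_boxEigs {v : ℝ → ℝ} {γm γp lam : ℝ} (hv : IsSawtooth v γm γp) (hlam : 0 < lam)
    (α E : ℝ) {q : ℕ} (hq : 2 ≤ q) {p : ℤ} (hpq : IsCoprime p (q : ℤ))
    (hp : (q : ℝ) * |(q : ℝ) * α - p| ≤ 1) (y z ε η Λ : ℝ)
    (hε : 0 < ε) (hε1 : ε ≤ 1) (hεq : ε ≤ lam * γm / q) (hη : 0 < η) (hη1 : η ≤ 1)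
    (hy : |cont (boxDiag lam v α E y) q| ≤ Real.exp Λ)
    (hη2 : Λ - ltm (enPot lam v α E z) q + Real.log 2 +
      22 * (Real.log (|E| + lam * γp + 2 + q) - Real.log ε) < 13 * Real.log η) :
    ∃ j, |boxEigs lam v α E q y j| < η := by
  by_contra hc
  push Not at hc
  obtain ⟨n, rfl⟩ : ∃ n, q = n + 2 := ⟨q - 2, by omega⟩
  obtain ⟨w', hw1, hw2, hw3⟩ := exists_large_cont (enPot lam v α E z) n
  set d' : ℕ → ℝ := fun i => -w' i with hd'
  set R : ℝ := |E| + lam * γp + 2 + ((n + 2 : ℕ) : ℝ) with hR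
  have hD : 0 ≤ |E| + lam * γp := (abs_nonneg _).trans (abs_enPot_le hv hlam α E 0 0)
  set b : Fin (n + 2) → ℝ := eigs fun i : Fin (n + 2) => d' i with hb
  have hbR : ∀ i, |b i| ≤ R := by
    refine abs_eigs_le _ _ fun i => ?_
    rw [hd', abs_neg]
    have h1 := hw2 i
    have h2 := abs_enPot_le hv hlam α E z i
    have h3 := abs_sub_abs_le_abs_sub (w' i) (enPot lam v α E z i)
    linarith
  have haR : ∀ i, |boxEigs lam v α E (n + 2) y i| ≤ R := by
    intro i
    have := abs_eigs_le (fun i : Fin (n + 2) => boxDiag lam v α E y i) _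
      (fun i => abs_boxDiag_le hv hlam α E y i) i
    refine (show |boxEigs lam v α E (n + 2) y i| ≤ |E| + lam * γp + ((n + 2 : ℕ) : ℝ) from
      this).trans ?_
    linarith
  -- the perturbation changes only two diagonal entries
  set S : Finset (Fin (n + 2)) := {0, Fin.last (n + 1)} with hS
  have hScard : S.card ≤ 2 := Finset.card_le_two
  have hSd : ∀ i : Fin (n + 2), i ∉ S → d' i = lam * v (z + ((i : ℕ) : ℝ) * α) - E := by
    intro i hi
    simp only [hS, Finset.mem_insert, Finset.mem_singleton, not_or] at hi
    have h0 : (i : ℕ) ≠ 0 := fun h => hi.1 (Fin.ext h)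
    have h1 : (i : ℕ) ≠ n + 1 := fun h => hi.2 (Fin.ext h)
    simp only [hd', hw1 i h0 h1, enPot]; ring
  have hzb : ∀ t, cntBelow (boxEigs lam v α E (n + 2) z) t ≤ cntBelow b t + 2 := by
    intro t
    have := cntBelow_eigs_mono (fun i : Fin (n + 2) => lam * v (z + ((i : ℕ) : ℝ) * α) - E)
      (fun i => d' i) S 0 t (fun i hi => by rw [hSd i hi, add_zero])
    rw [sub_zero] at this
    exact this.trans (by rw [hb]; omega)
  have hbz : ∀ t, cntBelow b t ≤ cntBelow (boxEigs lam v α E (n + 2) z) t + 2 := by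
    intro t
    have := cntBelow_eigs_mono (fun i : Fin (n + 2) => d' i)
      (fun i => lam * v (z + ((i : ℕ) : ℝ) * α) - E) S 0 t (fun i hi => by rw [hSd i hi, add_zero])
    rw [sub_zero] at this
    have h2 : cntBelow (eigs fun i : Fin (n + 2) => lam * v (z + ((i : ℕ) : ℝ) * α) - E) t =
      cntBelow (boxEigs lam v α E (n + 2) z) t := rfl
    rw [h2] at this
    exact this.trans (by omega)
  have hq0 : 0 < n + 2 := by omega
  have h1 := sum_log_max_le (boxEigs lam v α E (n + 2) y) b ε R 11 hε
    (by have : (0 : ℝ) ≤ ((n + 2 : ℕ) : ℝ) := by positivity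
        linarith) haR hbR
    (fun t => by
      have := cntBelow_boxEigs_le hv hlam α E hq0 hpq hp z y t
      have := hzb t
      omega)
    (fun t => by
      have := cntBelow_boxEigs_le hv hlam α E hq0 hpq hp y z t
      have := hbz t
      omega)
  have h2 := sum_log_max_le_sum_log (boxEigs lam v α E (n + 2) y) ε η 13 hε1 hη hη1 hc
    (card_small_boxEigs_le hv hlam α E hq0 hpq hp y ε hεq)
  have h3 : ∑ i, Real.log |boxEigs lam v α E (n + 2) y i| ≤ Λ := by
    rw [← Real.log_prod (fun i _ => (hη.trans_le (hc i)).ne')]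
    have e : ∏ i, |boxEigs lam v α E (n + 2) y i| = |cont (boxDiag lam v α E y) (n + 2)| := by
      rw [← det_jac, abs_det_jac]; rfl
    rw [← e] at hy
    rw [Real.log_le_iff_le_exp (Finset.prod_pos fun i _ => hη.trans_le (hc i))]
    exact hy
  have h4 : ltm (enPot lam v α E z) (n + 2) - Real.log 2 ≤ ∑ i, Real.log (max |b i| ε) := by
    have hM := one_le_matNorm_tm (enPot lam v α E z) (n + 2)
    have e : ∏ i, |b i| = |cont w' (n + 2)| := by
      rw [← abs_cont_neg, ← det_jac, abs_det_jac]
    rw [← Real.log_prod (fun i _ => (lt_max_of_lt_right hε).ne'), sub_le_iff_le_add,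
      ← Real.log_mul (Finset.prod_pos fun i _ => lt_max_of_lt_right hε).ne' (by norm_num), ltm]
    refine Real.log_le_log (by linarith) (hw3.trans ?_)
    rw [mul_comm, ← e]
    gcongr
    exact le_max_left _ _
  push_cast at h1 h2
  linarith

/-! ### Singular points have small determinants -/

lemma jacobiBox_eq (lam : ℝ) (v : ℝ → ℝ) (α x E : ℝ) (a : ℤ) (q : ℕ) :
    jacobiBox lam v α x E a q = jac fun i : Fin q => boxDiag lam v α E (x + a * α) i := by
  have h : ∀ i : ℕ, x + ((a : ℝ) + i) * α = x + a * α + i * α := fun i => by ring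
  ext i j
  simp only [jacobiBox, jac, boxDiag, h]

/-- By Cramer's rule the Green function of a box is a ratio of determinants, the numerators being
bounded by the uniform upper bound; hence at a singular point the denominators must be small. -/
lemma abs_cont_le_of_singular {lam : ℝ} {v : ℝ → ℝ} {α x E g δ ε : ℝ} {q N : ℕ} {m : ℤ}
    (hg : 0 < g) (hδ : 0 < δ) (hε : 0 < ε)
    (hup : ∀ n ≥ N, ∀ x, ltm (enPot lam v α E x) n ≤ n * (g + ε)) (hqN : 5 * N ≤ q)
    (hm : ¬ IsRegularPt lam v α x E (g - δ) q m) (a : ℤ) (i : ℕ) (hi : m = a + i)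
    (hi1 : q ≤ 5 * i) (hi2 : q + 5 * i + 5 ≤ 5 * q) :
    |cont (boxDiag lam v α E (x + a * α)) q| ≤ Real.exp (q * (g - δ / 5 + ε)) := by
  set d := boxDiag lam v α E (x + a * α) with hd
  have hi1' : (q : ℝ) ≤ 5 * i := by exact_mod_cast hi1
  have hi2' : (q : ℝ) + 5 * i + 5 ≤ 5 * q := by exact_mod_cast hi2
  have hiq : i < q := by omega
  by_cases hu : IsUnit (jac fun i : Fin q => d i).det
  swap
  · rw [isUnit_iff_ne_zero, not_not, det_jac] at hu
    rw [hu, abs_zero]; positivity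
  -- converts a lower bound for the Green function into an upper bound for the determinant
  have key : ∀ (G c : ℝ) (n' n : ℕ), G * |cont d q| = c → n' + n + 1 = q → N ≤ n →
      (q : ℝ) ≤ 5 * n' → c ≤ Real.exp (n * (g + ε)) → Real.exp (-(g - δ) * n') ≤ G →
      |cont d q| ≤ Real.exp (q * (g - δ / 5 + ε)) := by
    intro G c n' n hG hn hNn hn' hc hGl
    have h1 : Real.exp (-(g - δ) * n') * |cont d q| ≤ Real.exp (n * (g + ε)) := by
      refine (mul_le_mul_of_nonneg_right hGl (abs_nonneg _)).trans ?_
      rw [hG]; exact hc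
    have h2 : |cont d q| ≤ Real.exp (n * (g + ε) + (g - δ) * n') := by
      rw [Real.exp_add, mul_comm]
      have h3 := mul_le_mul_of_nonneg_left h1 (Real.exp_pos ((g - δ) * n')).le
      rwa [← mul_assoc, ← Real.exp_add, neg_mul, add_neg_cancel, Real.exp_zero, one_mul] at h3
    refine h2.trans (Real.exp_le_exp.2 ?_)
    have e : (q : ℝ) = n' + n + 1 := by exact_mod_cast hn.symm
    have h4 : δ * (q / 5) ≤ δ * n' := mul_le_mul_of_nonneg_left (by linarith) hδ.le
    have h5 : 0 ≤ ε * n' := by positivity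
    have h6 : (q : ℝ) * (g - δ / 5 + ε) = (n' + n + 1) * (g + ε) - δ * (q / 5) := by
      rw [← e]; ring
    rw [h6]
    nlinarith
  by_contra hcon
  apply hm
  have c1 : ((m - a : ℤ) : ℝ) = i := by rw [hi]; push_cast; ring
  have c2 : ((a + (q : ℤ) - 1 - m : ℤ) : ℝ) = ((q - 1 - i : ℕ) : ℝ) := by
    have : a + (q : ℤ) - 1 - m = ((q - 1 - i : ℕ) : ℤ) := by omega
    rw [this]; push_cast; ring
  have c3 : ((q - 1 - i : ℕ) : ℝ) = q - 1 - i := by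
    rw [Nat.cast_sub (by omega), Nat.cast_sub (by omega)]; push_cast; ring
  refine ⟨a, by omega, by omega, by rw [c1]; linarith, by rw [c2, c3]; linarith, ?_, ?_, ?_⟩
  · rw [jacobiBox_eq]; exact hu
  · intro i' j hi' hj
    have hii : (i' : ℕ) = i := by omega
    rw [jacobiBox_eq, c1]
    by_contra hlt
    push Not at hlt
    refine hcon (key _ _ i (q - 1 - i) (green_left q d hu i' j hj) (by omega) (by omega) hi1' ?_ hlt)
    have e : (fun k => d (i' + 1 + k)) = boxDiag lam v α E (x + a * α + ((i + 1 : ℕ) : ℝ) * α) := by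
      ext k
      simp only [hd, boxDiag, hii]; push_cast; congr 3; ring
    rw [e, hii]
    exact (abs_cont_boxDiag_le _ _ _ _ _ _).trans (Real.exp_le_exp.2 (hup _ (by omega) _))
  · intro i' j hi' hj
    have hii : (i' : ℕ) = i := by omega
    rw [jacobiBox_eq, c2]
    by_contra hlt
    push Not at hlt
    refine hcon (key _ _ (q - 1 - i) i (green_right q d hu i' j hj) (by omega) (by omega)
      (by rw [c3]; linarith) ?_ hlt)
    rw [hii]
    exact (abs_cont_boxDiag_le _ _ _ _ _ _).trans (Real.exp_le_exp.2 (hup _ (by omega) _))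

/-! ### Repulsion -/

lemma distInt_neg (z : ℝ) : distInt (-z) = distInt z := by
  have h : ∀ z : ℝ, distInt (-z) ≤ distInt z := fun z => by
    have := round_le (-z) (-round z)
    refine this.trans (le_of_eq ?_)
    rw [distInt, ← abs_neg]; push_cast; congr 1; ring
  refine le_antisymm (h z) ?_
  simpa using h (-z)

lemma eventually_log_bounds (A A' c c' : ℝ) (hc : 0 < c) (hc' : 0 < c') :
    ∀ᶠ q : ℕ in atTop, A + 44 * Real.log q < c * q ∧ A' < c' * q := by
  have h1 : ∀ᶠ q : ℕ in atTop, ‖Real.log q‖ ≤ c / 88 * ‖(q : ℝ)‖ :=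
    tendsto_natCast_atTop_atTop.eventually
      (Real.isLittleO_log_id_atTop.bound (by positivity : 0 < c / 88))
  have h2 : ∀ᶠ q : ℕ in atTop, 2 * A / c < (q : ℝ) :=
    tendsto_natCast_atTop_atTop.eventually (eventually_gt_atTop _)
  have h3 : ∀ᶠ q : ℕ in atTop, A' / c' < (q : ℝ) :=
    tendsto_natCast_atTop_atTop.eventually (eventually_gt_atTop _)
  filter_upwards [h1, h2, h3] with q h1 h2 h3
  rw [Real.norm_eq_abs, Real.norm_eq_abs, abs_of_nonneg (Nat.cast_nonneg (α := ℝ) q)] at h1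
  rw [div_lt_iff₀ hc] at h2
  rw [div_lt_iff₀ hc'] at h3
  have := le_abs_self (Real.log q)
  constructor <;> linarith

/-- Starting points of the boxes of length `q` around the singular points `m` and `n`: each group has
slightly more than `q / 2` members, and the separation of `m` and `n` makes the groups disjoint. -/
lemma exists_box_starts (m n : ℤ) (q : ℕ) (hq : 20 ≤ q) (hmn : (q : ℤ) + 1 < 2 * |m - n|) :
    ∃ A : Finset ℤ, q < A.card ∧
      (∀ a ∈ A, ∃ i : ℕ, (m = a + i ∨ n = a + i) ∧ q ≤ 5 * i ∧ q + 5 * i + 5 ≤ 5 * q) ∧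
      ∀ a ∈ A, ∀ b ∈ A, |a - b| ≤ 3 * |m - n| := by
  set o : ℤ := (((q + 4) / 5 : ℕ) : ℤ) with ho
  set s : ℤ := (((q + 2) / 2 : ℕ) : ℤ) with hs
  have hs' : s ≤ |m - n| := by omega
  refine ⟨Finset.Ioc (m - o - s) (m - o) ∪ Finset.Ioc (n - o - s) (n - o), ?_, ?_, ?_⟩
  · rw [Finset.card_union_of_disjoint, Int.card_Ioc, Int.card_Ioc]
    · omega
    · rw [Finset.disjoint_left]
      intro a ha hb
      rw [Finset.mem_Ioc] at ha hb
      rcases abs_cases (m - n) with h | h <;> omega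
  · intro a ha
    rw [Finset.mem_union, Finset.mem_Ioc, Finset.mem_Ioc] at ha
    rcases ha with ha | ha
    · exact ⟨(m - a).toNat, Or.inl (by omega), by omega, by omega⟩
    · exact ⟨(n - a).toNat, Or.inr (by omega), by omega, by omega⟩
  · intro a ha b hb
    rw [Finset.mem_union, Finset.mem_Ioc, Finset.mem_Ioc] at ha hb
    rcases abs_cases (m - n) with h | h <;> rcases abs_cases (a - b) with h2 | h2 <;> omega

/-- repulsion of `(γ(E) - δ, q_k)`-singular points. -/
theorem singular_points_repulsion
    (α lam γm γp : ℝ) (v : ℝ → ℝ)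
    (hα : Irrational α) (hlam : 0 < lam) (hγm : 0 < γm) (hγp : 0 < γp)
    (hper : ∀ x : ℝ, v (x + 1) = v x) (hv0 : v 0 = 0)
    (hmono : ∀ x y : ℝ, 0 ≤ x → x ≤ y → y < 1 →
      γm * (y - x) ≤ v y - v x ∧ v y - v x ≤ γp * (y - x))
    (hdio : IsDiophantine α) (x E ρ δ : ℝ)
    (hγE : 0 < lyap lam v α E) (hρ : cfRho α < ρ) (hρ1 : ρ < 1)
    (hδ : 0 < δ) (hδγ : δ < lyap lam v α E) :
    ∃ (q₀ : ℕ) (C : ℝ), 0 < C ∧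
      ∀ k : ℕ, 1 ≤ k →
        (cfDen α (k - 1) : ℝ) / (cfDen α (k + 1) : ℝ) ≤ ρ →
        q₀ < cfDen α k →
        ∀ m n : ℤ,
          ¬ IsRegularPt lam v α x E (lyap lam v α E - δ) (cfDen α k) m →
          ¬ IsRegularPt lam v α x E (lyap lam v α E - δ) (cfDen α k) n →
          ((cfDen α k : ℝ) + 1) / 2 < |(m : ℝ) - (n : ℝ)| →
          Real.exp (C * (cfDen α k : ℝ)) < |(m : ℝ) - (n : ℝ)| := by
  have hv : IsSawtooth v γm γp := ⟨hγm, hγp, hper, hv0, hmono⟩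
  obtain ⟨C₀, τ, hC₀, hτ, hdio⟩ := hdio
  set g := lyap lam v α E with hg
  obtain ⟨N, hN⟩ := eventually_ltm_le hv hlam hα E (δ / 20) (by positivity)
  rw [← hg] at hN
  set D : ℝ := |E| + lam * γp with hD
  have hD0 : 0 ≤ D := by
    have := mul_pos hlam hγp
    positivity
  set κ : ℝ := min 1 (lam * γm) with hκ
  have hκ0 : 0 < κ := lt_min one_pos (mul_pos hlam hγm)
  -- rate of decay of the smallest eigenvalue, chosen so that `13 * c = δ / 20`
  set c : ℝ := δ / 260 with hc
  have hc0 : 0 < c := by positivity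
  obtain ⟨q₁, hq₁⟩ := eventually_atTop.1 (eventually_log_bounds
    (Real.log 2 + 22 * (Real.log (D + 3) - Real.log κ))
    (Real.log 2 - Real.log (lam * γm) - Real.log C₀ + τ * Real.log 3) (δ / 20) (c / 2)
    (by positivity) (by positivity))
  refine ⟨q₁ + 5 * N + 20, c / (2 * τ), by positivity, ?_⟩
  intro k _ _ hqk m n hm hn hmn
  obtain ⟨p, hpq, hp⟩ := exists_convergent hα k
  set q := cfDen α k with hq
  obtain ⟨hb1, hb2⟩ := hq₁ q (by omega)
  have hq20 : 20 ≤ q := by omega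
  have hq1 : (1 : ℝ) ≤ q := by exact_mod_cast (by omega : 1 ≤ q)
  have hq0 : (0 : ℝ) < q := by linarith
  have hmn' : (q : ℤ) + 1 < 2 * |m - n| := by
    have : (q : ℝ) + 1 < 2 * |(m : ℝ) - n| := by linarith
    exact_mod_cast this
  obtain ⟨A, hAcard, hAbox, hAdist⟩ := exists_box_starts m n q hq20 hmn'
  obtain ⟨z, hz⟩ := exists_le_ltm hv hlam α E (δ / 20) (by positivity) q (by omega)
  rw [← hg] at hz
  set η : ℝ := Real.exp (-(c * q)) with hη
  have hη0 : 0 < η := Real.exp_pos _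
  have hη1 : η ≤ 1 := Real.exp_le_one_iff.2 (by
    have : 0 ≤ c * q := by positivity
    linarith)
  have hlg : 0 < lam * γm := mul_pos hlam hγm
  have hlogR : Real.log (D + 2 + q) ≤ Real.log (D + 3) + Real.log q := by
    rw [← Real.log_mul (by positivity) (by positivity)]
    refine Real.log_le_log (by positivity) ?_
    nlinarith
  have hlogε : Real.log (κ / q) = Real.log κ - Real.log q :=
    Real.log_div hκ0.ne' hq0.ne'
  have hsmall : ∀ a ∈ A, ∃ j, |boxEigs lam v α E q (x + a * α) j| < lam * γm * (η / (lam * γm)) := by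
    intro a ha
    rw [mul_div_cancel₀ _ hlg.ne']
    have hdet : |cont (boxDiag lam v α E (x + a * α)) q| ≤
        Real.exp (q * (g - δ / 5 + δ / 20)) := by
      obtain ⟨i, hi | hi, hi1, hi2⟩ := hAbox a ha
      · exact abs_cont_le_of_singular hγE hδ (by positivity) hN (by omega) hm a i hi hi1 hi2
      · exact abs_cont_le_of_singular hγE hδ (by positivity) hN (by omega) hn a i hi hi1 hi2
    refine exists_small_boxEigs hv hlam α E (by omega) hpq hp (x + a * α) z (κ / q) η _
      (by positivity) ?_ ?_ hη0 hη1 hdet ?_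
    · rw [div_le_one hq0]; exact (min_le_left _ _).trans hq1
    · exact div_le_div_of_nonneg_right (min_le_right _ _) hq0.le
    · rw [hlogε, hη, Real.log_exp, ← hD]
      have e1 : (q : ℝ) * (g - δ / 5 + δ / 20) = q * (g - δ / 20) - δ / 10 * q := by ring
      have e2 : 13 * -(c * q) = -(δ / 20 * q) := by rw [hc]; ring
      rw [e1, e2]
      linarith
  obtain ⟨a, ha, b, hb, hab, hdist⟩ := exists_close_pair hv hlam α E (by omega) x
    (η / (lam * γm)) (by positivity) A hAcard hsmall
  -- the Diophantine condition for `a - b`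
  have hM0 : 0 < (a - b).natAbs := Int.natAbs_pos.2 (sub_ne_zero.2 hab)
  have hMd : distInt (((a - b).natAbs : ℝ) * α) = distInt (((a - b : ℤ) : ℝ) * α) := by
    rw [Nat.cast_natAbs]
    rcases abs_choice (a - b) with h | h <;> rw [h]
    rw [Int.cast_neg, neg_mul, distInt_neg]
  have hd := (hdio _ hM0).trans (hMd.le.trans hdist)
  have hMle : (((a - b).natAbs : ℕ) : ℝ) ≤ 3 * |(m : ℝ) - n| := by
    rw [Nat.cast_natAbs]; exact_mod_cast hAdist a ha b hb
  have hMpos : (0 : ℝ) < (((a - b).natAbs : ℕ) : ℝ) := by exact_mod_cast hM0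
  by_contra hcon
  push Not at hcon
  have hlogM : Real.log (((a - b).natAbs : ℕ) : ℝ) ≤ Real.log 3 + c / (2 * τ) * q := by
    rw [← Real.log_exp (c / (2 * τ) * q), ← Real.log_mul (by norm_num) (Real.exp_pos _).ne']
    exact Real.log_le_log hMpos (hMle.trans (by linarith))
  have hlogd := Real.log_le_log (by positivity) hd
  rw [Real.log_mul hC₀.ne' (by positivity), Real.log_rpow hMpos,
    Real.log_mul (by norm_num) (by positivity), Real.log_div hη0.ne' hlg.ne', hη,
    Real.log_exp] at hlogd
  have h1 := mul_le_mul_of_nonneg_left hlogM hτ.le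
  have h2 : τ * (Real.log 3 + c / (2 * τ) * q) = τ * Real.log 3 + c / 2 * q := by
    field_simp
  rw [h2] at h1
  linarith

end
end

section
/- Eigenvalue repulsion: suppose ρ(α) < ρ < 1, q_k ∈ Q(α,ρ) with k odd. Then for every K ≤ q_k − 1, every 0 ≤ m ≤ q_k − K − 1, and every 0 ≤ l ≤ q_k − 1, the ordered eigenvalues of the periodic restriction H̃_{q_k}(β_l) satisfy μ̃_{m+K}(β_l) − μ̃_m(β_l) ≥ λ ( K(1 − ρ)γ₋/q_k − 3γ₊/q_{k+1} ), where β_0 < β_1 < … < β_{q_k−1} is the increasing enumeration of the set {{−jα} : j = 0,…,q_k−1} ⊂ [0,1). -/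
/-! The mechanism is a comparison of `H̃_q(0)`, `q = q_k`, with `H̃_q(β_K)`.

Write `δ = ‖q_k α‖` and `ε = ‖q_{k-1} α‖`. Since `k` is odd, `q_k α` lies `δ` to the left of an
integer. A rotation of the cycle turns `H̃_q({-jα})` into a matrix whose `i`-th diagonal entry is
`λ v(iα)` or `λ v(iα + δ)`, the latter only for `i ≠ 0`; by best approximation (`cfErr_le_abs`) the
points `iα`, `0 < i < q`, stay at distance at least `ε > δ` from the integers, so the shift crosses no
jump of `v`. Hence every ordered eigenvalue at every phase `β_l` agrees with the one at phase `0` up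
to `λ γ₊ δ` (`sortedEigs_near`).

Moving the phase from `0` to `β_K` raises every diagonal entry by at least `λ γ₋ β_K`, except at the at
most `K` sites where `{iα} + β_K ≥ 1` (`card_wrap_le`). A dimension count (`sortedEigs_compare`) gives
`μ̃_{m+K}(β_K) ≥ μ̃_m(0) + λ γ₋ β_K` (`sortedEigs_lift`). The points `β_l` are `ε`-separated, so
`β_K ≥ K ε`; the identity `q_k ε + q_{k-1} δ = 1` together with `δ ≤ 1 / q_{k+1}` yields
`ε ≥ (1 - ρ) / q_k`. Returning to phase `β_l` costs `2 λ γ₊ δ ≤ 3 λ γ₊ / q_{k+1}`. -/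

open MeasureTheory Filter

noncomputable section

/-- The periodic restriction `H̃_n(x)`: the `n × n` symmetric matrix with diagonal entries
`λ v(x + mα)` and entries `1` at positions `(m, (m ± 1) mod n)`. -/
noncomputable def periodicMat (lam : ℝ) (v : ℝ → ℝ) (α : ℝ) (n : ℕ) (x : ℝ) :
    Matrix (Fin n) (Fin n) ℝ :=
  fun i j =>
    if i = j then lam * v (x + ((i : ℕ) : ℝ) * α)
    else if (j : ℕ) = ((i : ℕ) + 1) % n ∨ (j : ℕ) = ((i : ℕ) + n - 1) % n then 1 else 0

/-- The `l`-th eigenvalue of `M` (roots of the characteristic polynomial with multiplicity),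
in nondecreasing order. -/
noncomputable def sortedEigs {n : ℕ} (M : Matrix (Fin n) (Fin n) ℝ) (l : ℕ) : ℝ :=
  (((Matrix.charpoly M).roots).sort (· ≤ ·)).getD l 0

/-- The increasing enumeration `β_0 < β_1 < … < β_{n-1}` of the set
`{ {-jα} : j = 0, …, n-1 } ⊂ [0,1)`. -/
noncomputable def betaPts (α : ℝ) (n : ℕ) (l : ℕ) : ℝ :=
  (((Finset.range n).image (fun j : ℕ => Int.fract (-(j : ℝ) * α))).sort (· ≤ ·)).getD l 0


/-! ### Eigenvalue comparison for symmetric matrices -/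

/-- The spectral theorem in coordinates: the ordered eigenvalues of a symmetric matrix `A` diagonalize
its quadratic form in linear coordinates `c i` in which the Euclidean form is the sum of squares. -/
lemma exists_spectral_coords {n : ℕ} {A : Matrix (Fin n) (Fin n) ℝ} (hA : A.IsHermitian) :
    ∃ (μ : Fin n → ℝ) (c : Fin n → (Fin n → ℝ) →ₗ[ℝ] ℝ), Monotone μ ∧
      (∀ i : Fin n, sortedEigs A i = μ i) ∧
      (∀ x, x ⬝ᵥ x = ∑ i, (c i x) ^ 2) ∧
      (∀ x, x ⬝ᵥ (A.mulVec x) = ∑ i, μ i * (c i x) ^ 2) := by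
  set e := Tuple.sort hA.eigenvalues with he
  let b := hA.eigenvectorBasis
  let c : Fin n → (Fin n → ℝ) →ₗ[ℝ] ℝ := fun i => dotProductBilin ℝ ℝ (⇑(b (e i)))
  have hc : ∀ i x, c i x = inner ℝ (b (e i)) (WithLp.toLp 2 x) := by
    intro i x
    simp [c, EuclideanSpace.inner_eq_star_dotProduct, dotProduct_comm]
  have hdot : ∀ x y : Fin n → ℝ, x ⬝ᵥ y = ∑ i, c i x * c i y := by
    intro x y
    have h := b.sum_inner_mul_inner (WithLp.toLp 2 x) (WithLp.toLp 2 y)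
    rw [← Equiv.sum_comp e] at h
    have h2 : inner ℝ (WithLp.toLp 2 x) (WithLp.toLp 2 y) = x ⬝ᵥ y := by
      simp [EuclideanSpace.inner_eq_star_dotProduct, dotProduct_comm]
    rw [← h2, ← h]
    refine Finset.sum_congr rfl fun i _ => ?_
    rw [hc, hc, real_inner_comm]
  refine ⟨hA.eigenvalues ∘ e, c, Tuple.monotone_sort _, ?_, ?_, ?_⟩
  · intro i
    have hroots : A.charpoly.roots.sort (· ≤ ·) = List.ofFn (hA.eigenvalues ∘ e) := by
      refine List.Perm.eq_of_pairwise' (r := (· ≤ ·)) (Multiset.pairwise_sort _ _) ?_ ?_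
      · exact (Tuple.monotone_sort hA.eigenvalues).sortedLE_ofFn.pairwise
      · rw [← Multiset.coe_eq_coe, Multiset.sort_eq, hA.roots_charpoly_eq_eigenvalues,
          ← Fin.univ_val_map, ← Multiset.map_map hA.eigenvalues e]
        congr 1
        simp
    unfold sortedEigs
    rw [hroots]
    simp
  · intro x
    rw [hdot]
    exact Finset.sum_congr rfl fun i _ => by ring
  · intro x
    rw [hdot]
    refine Finset.sum_congr rfl fun i _ => ?_
    have : c i (A.mulVec x) = hA.eigenvalues (e i) * c i x := by
      have hs : A.transpose = A := by simpa using hA.eq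
      simp only [c, dotProductBilin_apply_apply]
      rw [Matrix.dotProduct_mulVec, ← Matrix.mulVec_transpose, hs, hA.mulVec_eigenvectorBasis]
      simp [b]
    rw [this, Function.comp_apply]
    ring

/-- A weak form of Weyl's inequalities: if the form of `B` dominates that of `A` plus `c` on the
vectors vanishing on a set `S` of at most `K` coordinates, then eigenvalues are compared with an index shift
of `K`. The test vector is a common zero of `n - 1` linear functionals. -/
lemma sortedEigs_compare {n : ℕ} {A B : Matrix (Fin n) (Fin n) ℝ} (hA : A.IsHermitian)
    (hB : B.IsHermitian) (S : Finset (Fin n)) (K m : ℕ) (hS : S.card ≤ K) (hm : m + K < n) (c : ℝ)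
    (h : ∀ x : Fin n → ℝ, (∀ i ∈ S, x i = 0) →
      x ⬝ᵥ (A.mulVec x) + c * (x ⬝ᵥ x) ≤ x ⬝ᵥ (B.mulVec x)) :
    sortedEigs A m + c ≤ sortedEigs B (m + K) := by
  obtain ⟨μ, a, hμ, hμe, ha1, ha2⟩ := exists_spectral_coords hA
  obtain ⟨ν, b, hν, hνe, hb1, hb2⟩ := exists_spectral_coords hB
  let im : Fin n := ⟨m, by omega⟩
  let iK : Fin n := ⟨m + K, hm⟩
  have e1 : sortedEigs A m = μ im := hμe im
  have e2 : sortedEigs B (m + K) = ν iK := hνe iK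
  rw [e1, e2]
  let F : (Fin n → ℝ) →ₗ[ℝ] ((Finset.Iio im → ℝ) × (Finset.Ioi iK → ℝ)) × (S → ℝ) :=
    ((LinearMap.pi fun i : Finset.Iio im => a i).prod
      (LinearMap.pi fun i : Finset.Ioi iK => b i)).prod
      (LinearMap.pi fun i : S => LinearMap.proj (i : Fin n))
  have hF : LinearMap.ker F ≠ ⊥ := by
    apply LinearMap.ker_ne_bot_of_finrank_lt
    simp only [Module.finrank_prod, Module.finrank_fintype_fun_eq_card, Fintype.card_coe,
      Fin.card_Iio, Fin.card_Ioi, Fintype.card_fin, im, iK]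
    omega
  obtain ⟨x, hx, hx0⟩ := (Submodule.ne_bot_iff _).mp hF
  rw [LinearMap.mem_ker] at hx
  have hxa : ∀ i, i < im → a i x = 0 := fun i hi =>
    congrFun (congrArg (fun p => p.1.1) hx) ⟨i, by simpa using hi⟩
  have hxb : ∀ i, iK < i → b i x = 0 := fun i hi =>
    congrFun (congrArg (fun p => p.1.2) hx) ⟨i, by simpa using hi⟩
  have hxS : ∀ i ∈ S, x i = 0 := fun i hi =>
    congrFun (congrArg (fun p => p.2) hx) ⟨i, hi⟩
  have hpos : 0 < x ⬝ᵥ x := by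
    have h0 : 0 ≤ x ⬝ᵥ x := by rw [ha1]; positivity
    exact lt_of_le_of_ne h0 (fun h => hx0 (dotProduct_self_eq_zero.mp h.symm))
  have hlow : μ im * (x ⬝ᵥ x) ≤ x ⬝ᵥ (A.mulVec x) := by
    rw [ha1, ha2, Finset.mul_sum]
    refine Finset.sum_le_sum fun i _ => ?_
    rcases lt_or_ge i im with hi | hi
    · simp [hxa i hi]
    · exact mul_le_mul_of_nonneg_right (hμ hi) (sq_nonneg _)
  have hup : x ⬝ᵥ (B.mulVec x) ≤ ν iK * (x ⬝ᵥ x) := by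
    rw [hb1, hb2, Finset.mul_sum]
    refine Finset.sum_le_sum fun i _ => ?_
    rcases lt_or_ge iK i with hi | hi
    · simp [hxb i hi]
    · exact mul_le_mul_of_nonneg_right (hν hi) (sq_nonneg _)
  have := h x hxS
  by_contra hcon
  push Not at hcon
  nlinarith

/-- The adjacency matrix of the `n`-cycle plus the diagonal `d`. -/
def cycMat {n : ℕ} [NeZero n] (d : Fin n → ℝ) : Matrix (Fin n) (Fin n) ℝ :=
  fun i j => if i = j then d i else if j = i + 1 ∨ i = j + 1 then 1 else 0

lemma cycMat_isHermitian {n : ℕ} [NeZero n] (d : Fin n → ℝ) : (cycMat d).IsHermitian := by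
  ext i j
  simp only [cycMat, Matrix.conjTranspose_apply, star_trivial]
  by_cases h : i = j
  · simp [h]
  · simp [h, Ne.symm h, or_comm]

lemma periodicMat_eq_cycMat {n : ℕ} [NeZero n] (lam : ℝ) (v : ℝ → ℝ) (α x : ℝ) :
    periodicMat lam v α n x = cycMat (n := n) (fun i => lam * v (x + ((i : ℕ) : ℝ) * α)) := by
  have hn : 0 < n := Nat.pos_of_ne_zero (NeZero.ne n)
  ext i j
  unfold periodicMat cycMat
  have h1 : (j : ℕ) = ((i : ℕ) + 1) % n ↔ j = i + 1 := by
    rw [Fin.ext_iff, Fin.val_add, Fin.val_one', Nat.add_mod_mod]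
  have h2 : (j : ℕ) = ((i : ℕ) + n - 1) % n ↔ i = j + 1 := by
    rw [Fin.ext_iff, Fin.val_add, Fin.val_one', Nat.add_mod_mod]
    have hi := i.2
    have hj := j.2
    constructor
    · intro h
      rcases Nat.eq_zero_or_pos (i : ℕ) with h0 | h0
      · rw [h0, Nat.mod_eq_of_lt (by omega)] at h
        rw [h0, show (j : ℕ) + 1 = n by omega, Nat.mod_self]
      · rw [show (i : ℕ) + n - 1 = (i - 1) + n by omega, Nat.add_mod_right,
          Nat.mod_eq_of_lt (by omega)] at h
        rw [Nat.mod_eq_of_lt (by omega)]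
        omega
    · intro h
      rcases Nat.lt_or_ge ((j : ℕ) + 1) n with h0 | h0
      · rw [Nat.mod_eq_of_lt h0] at h
        rw [show (i : ℕ) + n - 1 = j + n by omega, Nat.add_mod_right, Nat.mod_eq_of_lt hj]
      · have hj1 : (j : ℕ) + 1 = n := by omega
        rw [hj1, Nat.mod_self] at h
        rw [h, Nat.mod_eq_of_lt (by omega)]
        omega
  simp only [h1, h2]

/-- Rotating the cycle does not change the spectrum. -/
lemma sortedEigs_cycMat_rotate {n : ℕ} [NeZero n] (d : Fin n → ℝ) (j : Fin n) (m : ℕ) :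
    sortedEigs (cycMat d) m = sortedEigs (cycMat fun i => d (i + j)) m := by
  have h : cycMat (fun i => d (i + j)) =
      Matrix.reindex (Equiv.addRight j).symm (Equiv.addRight j).symm (cycMat d) := by
    ext a b
    simp only [cycMat, Matrix.reindex_apply, Matrix.submatrix_apply, Equiv.symm_symm,
      Equiv.coe_addRight, add_left_inj]
    rw [add_right_comm a j 1, add_right_comm b j 1]
    simp only [add_left_inj]
  unfold sortedEigs
  rw [h, Matrix.charpoly_reindex]

/-- Comparison of two cyclic matrices whose diagonals are ordered off a set of at most `K` sites. -/
lemma sortedEigs_cycMat_compare {n : ℕ} [NeZero n] (d d' : Fin n → ℝ) (S : Finset (Fin n))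
    (K m : ℕ) (hS : S.card ≤ K) (hm : m + K < n) (c : ℝ) (h : ∀ i ∉ S, d i + c ≤ d' i) :
    sortedEigs (cycMat d) m + c ≤ sortedEigs (cycMat d') (m + K) := by
  refine sortedEigs_compare (cycMat_isHermitian d) (cycMat_isHermitian d') S K m hS hm c ?_
  intro x hx
  have hdec : cycMat d' = cycMat d + Matrix.diagonal (fun i => d' i - d i) := by
    ext i j
    by_cases hij : i = j
    · subst hij
      simp [cycMat]
    · simp [cycMat, hij]
  rw [hdec, Matrix.add_mulVec, dotProduct_add, add_le_add_iff_left]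
  simp only [dotProduct, Matrix.mulVec_diagonal, Finset.mul_sum]
  refine Finset.sum_le_sum fun i _ => ?_
  by_cases hi : i ∈ S
  · simp [hx i hi]
  · nlinarith [h i hi, mul_self_nonneg (x i)]

/-! ### Continued fraction approximation -/

/-- Numerators of the convergents of the fractional part of `α`. -/
def cfNum (α : ℝ) : ℕ → ℤ
  | 0 => 0
  | 1 => 1
  | k + 2 => cfA α (k + 1) * cfNum α (k + 1) + cfNum α k

/-- The approximation error `|q_k α - p_k|`, written as a product of Gauss iterates. -/
def cfErr (α : ℝ) : ℕ → ℝ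
  | 0 => gaussIter α 0
  | k + 1 => cfErr α k * gaussIter α (k + 1)

lemma gaussIter_succ {α : ℝ} (hα : Irrational α) (k : ℕ) :
    gaussIter α (k + 1) = 1 / gaussIter α k - cfA α k := by
  have h0 : 0 ≤ ⌊1 / gaussIter α k⌋ :=
    Int.floor_nonneg.mpr (one_div_nonneg.mpr (gaussIter_pos hα k).le)
  have hA : (cfA α k : ℝ) = (⌊1 / gaussIter α k⌋ : ℝ) := by
    have : ((cfA α k : ℕ) : ℤ) = ⌊1 / gaussIter α k⌋ := Int.toNat_of_nonneg h0
    exact_mod_cast this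
  rw [hA]
  exact (Int.self_sub_floor _).symm

lemma cfA_pos {α : ℝ} (hα : Irrational α) (k : ℕ) : 0 < cfA α k := by
  have h1 : 1 ≤ ⌊1 / gaussIter α k⌋ := by
    rw [Int.le_floor, Int.cast_one, le_div_iff₀ (gaussIter_pos hα k)]
    linarith [gaussIter_lt_one α k]
  unfold cfA
  omega

lemma cfDen_pos {α : ℝ} (hα : Irrational α) : ∀ k, 0 < cfDen α k
  | 0 => one_pos
  | 1 => cfA_pos hα 0
  | k + 2 => by
    have := cfDen_pos hα k
    simp only [cfDen]
    omega

lemma cfErr_pos {α : ℝ} (hα : Irrational α) (k : ℕ) : 0 < cfErr α k := by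
  induction k with
  | zero => exact gaussIter_pos hα 0
  | succ k ih => exact mul_pos ih (gaussIter_pos hα _)

lemma cfErr_succ_lt {α : ℝ} (hα : Irrational α) (k : ℕ) : cfErr α (k + 1) < cfErr α k :=
  mul_lt_of_lt_one_right (cfErr_pos hα k) (gaussIter_lt_one α _)

lemma cfErr_one {α : ℝ} (hα : Irrational α) : cfErr α 1 = 1 - cfA α 0 * cfErr α 0 := by
  have h := (gaussIter_pos hα 0).ne'
  simp only [cfErr, gaussIter_succ hα 0]
  field_simp

lemma cfErr_add_two {α : ℝ} (hα : Irrational α) (k : ℕ) :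
    cfErr α (k + 2) = cfErr α k - cfA α (k + 1) * cfErr α (k + 1) := by
  have h := (gaussIter_pos hα (k + 1)).ne'
  simp only [cfErr, gaussIter_succ hα (k + 1)]
  field_simp

lemma cfDen_mul_sub {α : ℝ} (hα : Irrational α) : ∀ k,
    (cfDen α k : ℝ) * Int.fract α - cfNum α k = (-1) ^ k * cfErr α k
  | 0 => by simp [cfDen, cfNum, cfErr, gaussIter]
  | 1 => by
    rw [cfErr_one hα]
    simp [cfDen, cfNum, cfErr, gaussIter]
  | k + 2 => by
    have h0 := cfDen_mul_sub hα k
    have h1 := cfDen_mul_sub hα (k + 1)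
    rw [cfErr_add_two hα]
    simp only [cfDen, cfNum]
    push_cast
    rw [pow_succ] at h1
    rw [pow_add]
    linear_combination (cfA α (k + 1) : ℝ) * h1 + h0

lemma cfDen_mul_cfErr {α : ℝ} (hα : Irrational α) (k : ℕ) :
    (cfDen α (k + 1) : ℝ) * cfErr α k + cfDen α k * cfErr α (k + 1) = 1 := by
  induction k with
  | zero =>
    rw [cfErr_one hα]
    simp [cfDen]
  | succ k ih =>
    rw [cfErr_add_two hα]
    simp only [cfDen]
    push_cast
    linear_combination ih

lemma cfNum_det (α : ℝ) (k : ℕ) :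
    cfNum α (k + 1) * cfDen α k - cfNum α k * cfDen α (k + 1) = (-1) ^ k := by
  induction k with
  | zero => simp [cfNum, cfDen]
  | succ k ih =>
    simp only [cfNum, cfDen]
    push_cast
    rw [pow_succ]
    linear_combination -ih

/-- Best approximation: below `q_{k+1}` nothing approximates better than `q_k`. The pair `(i, p)` is
expanded in the unimodular basis formed by two successive convergents. -/
lemma cfErr_le_abs {α : ℝ} (hα : Irrational α) (k i : ℕ) (hi : 0 < i) (hik : i < cfDen α (k + 1))
    (p : ℤ) : cfErr α k ≤ |(i : ℝ) * α - p| := by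
  set r : ℤ := p - i * ⌊α⌋ with hr
  have hfr : (i : ℝ) * α - p = i * Int.fract α - r := by
    rw [hr, ← Int.self_sub_floor]
    push_cast
    ring
  rw [hfr]
  set s : ℤ := (-1) ^ k with hs
  have hs2 : s * s = 1 := by rw [hs, ← pow_add, ← two_mul, pow_mul]; simp
  have hsR : |(s : ℝ)| = 1 := by simp [hs]
  have hdet := cfNum_det α k
  rw [← hs] at hdet
  set x : ℤ := s * (r * cfDen α k - i * cfNum α k) with hx
  set y : ℤ := s * (i * cfNum α (k + 1) - r * cfDen α (k + 1)) with hy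
  have hi_eq : (i : ℤ) = x * cfDen α (k + 1) + y * cfDen α k := by
    linear_combination (-(i : ℤ)) * hs2 - i * s * hdet
  have hr_eq : r = x * cfNum α (k + 1) + y * cfNum α k := by
    linear_combination (-r) * hs2 - r * s * hdet
  have hk0 := cfDen_mul_sub hα k
  have hk1 := cfDen_mul_sub hα (k + 1)
  have hsc : ((-1 : ℝ)) ^ k = s := by simp [hs]
  rw [pow_succ, hsc] at hk1
  rw [hsc] at hk0
  have hiR : (i : ℝ) = x * cfDen α (k + 1) + y * cfDen α k := by exact_mod_cast hi_eq
  have hrR : (r : ℝ) = x * cfNum α (k + 1) + y * cfNum α k := by exact_mod_cast hr_eq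
  have key : (i : ℝ) * Int.fract α - r = s * (y * cfErr α k - x * cfErr α (k + 1)) := by
    rw [hiR, hrR]
    linear_combination (x : ℝ) * hk1 + y * hk0
  rw [key, abs_mul, hsR, one_mul]
  have hq1 : (0 : ℤ) < cfDen α (k + 1) := by exact_mod_cast cfDen_pos hα (k + 1)
  have hq0 : (0 : ℤ) < cfDen α k := by exact_mod_cast cfDen_pos hα k
  have hi' : (0 : ℤ) < i := by exact_mod_cast hi
  have hik' : (i : ℤ) < cfDen α (k + 1) := by exact_mod_cast hik
  have e0 := cfErr_pos hα k
  have e1 := cfErr_pos hα (k + 1)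
  rcases lt_trichotomy y 0 with hy0 | hy0 | hy0
  · have hx0 : 0 ≤ x := by
      by_contra hneg
      push Not at hneg
      nlinarith
    have hyR : (y : ℝ) ≤ -1 := by exact_mod_cast (by omega : y ≤ -1)
    have hxR : (0 : ℝ) ≤ x := by exact_mod_cast hx0
    rw [le_abs]
    right
    nlinarith
  · exfalso
    rw [hy0, zero_mul, add_zero] at hi_eq
    rw [hi_eq] at hi' hik'
    have h1 : 0 < x := pos_of_mul_pos_left hi' hq1.le
    nlinarith
  · have hx0 : x ≤ 0 := by
      by_contra hneg
      push Not at hneg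
      nlinarith
    have hyR : (1 : ℝ) ≤ y := by exact_mod_cast hy0
    have hxR : (x : ℝ) ≤ 0 := by exact_mod_cast hx0
    rw [le_abs]
    left
    nlinarith

/-! ### The points `β_l` -/

section BetaPts

variable {α ε : ℝ} {q : ℕ}

/-- If `ε` bounds `‖iα‖` from below for `0 < i < q`, distinct points `{-jα}` are `ε`-separated. -/
lemma le_abs_fract_sub (hsep : ∀ i : ℕ, 0 < i → i < q → ∀ p : ℤ, ε ≤ |(i : ℝ) * α - p|)
    {j j' : ℕ} (hj : j < q) (hj' : j' < q) (hne : j ≠ j') :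
    ε ≤ |Int.fract (-(j : ℝ) * α) - Int.fract (-(j' : ℝ) * α)| := by
  wlog hlt : j < j' generalizing j j'
  · rw [abs_sub_comm]
    exact this hj' hj hne.symm (by omega)
  have h := hsep (j' - j) (by omega) (by omega) (⌊-(j : ℝ) * α⌋ - ⌊-(j' : ℝ) * α⌋)
  rw [Nat.cast_sub hlt.le] at h
  rw [← Int.self_sub_floor, ← Int.self_sub_floor]
  push_cast at h
  convert h using 2
  ring

/-- The set underlying `betaPts`. -/
def betaSet (α : ℝ) (q : ℕ) : Finset ℝ :=
  (Finset.range q).image (fun j : ℕ => Int.fract (-(j : ℝ) * α))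

lemma betaSet_injOn (hε : 0 < ε)
    (hsep : ∀ i : ℕ, 0 < i → i < q → ∀ p : ℤ, ε ≤ |(i : ℝ) * α - p|) :
    Set.InjOn (fun j : ℕ => Int.fract (-(j : ℝ) * α)) (Finset.range q) := by
  intro j hj j' hj' h
  by_contra hne
  have := le_abs_fract_sub hsep (by simpa using hj) (by simpa using hj') hne
  simp only at h
  rw [h, sub_self, abs_zero] at this
  linarith

lemma betaSet_card (hε : 0 < ε)
    (hsep : ∀ i : ℕ, 0 < i → i < q → ∀ p : ℤ, ε ≤ |(i : ℝ) * α - p|) :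
    (betaSet α q).card = q := by
  rw [betaSet, Finset.card_image_of_injOn (betaSet_injOn hε hsep), Finset.card_range]

lemma betaPts_eq (hcard : (betaSet α q).card = q) (l : Fin q) :
    betaPts α q l = (betaSet α q).orderEmbOfFin hcard l := by
  rw [Finset.orderEmbOfFin_apply]
  unfold betaPts
  rw [← betaSet, List.getD_eq_getElem]
  rfl

lemma betaPts_mem (hcard : (betaSet α q).card = q) {l : ℕ} (hl : l < q) :
    ∃ j < q, betaPts α q l = Int.fract (-(j : ℝ) * α) := by
  have h := (betaSet α q).orderEmbOfFin_mem hcard ⟨l, hl⟩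
  rw [← betaPts_eq] at h
  simp only [betaSet, Finset.mem_image, Finset.mem_range] at h
  obtain ⟨j, hj, h⟩ := h
  exact ⟨j, hj, h.symm⟩

lemma betaPts_ge (hε : 0 < ε)
    (hsep : ∀ i : ℕ, 0 < i → i < q → ∀ p : ℤ, ε ≤ |(i : ℝ) * α - p|) :
    ∀ {K : ℕ}, K < q → K * ε ≤ betaPts α q K := by
  have hcard := betaSet_card hε hsep
  intro K
  induction K with
  | zero =>
    intro h
    obtain ⟨j, _, hj⟩ := betaPts_mem hcard h
    rw [hj]
    simp
  | succ K ih =>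
    intro h
    have h0 := ih (by omega)
    obtain ⟨j, hjq, hj⟩ := betaPts_mem hcard (l := K) (by omega)
    obtain ⟨j', hjq', hj'⟩ := betaPts_mem hcard h
    have hlt : betaPts α q K < betaPts α q (K + 1) := by
      have := ((betaSet α q).orderEmbOfFin hcard).strictMono
        (show (⟨K, by omega⟩ : Fin q) < ⟨K + 1, h⟩ by simp)
      rwa [← betaPts_eq, ← betaPts_eq] at this
    have hne : j' ≠ j := by
      rintro rfl
      rw [hj, hj'] at hlt
      exact lt_irrefl _ hlt
    have := le_abs_fract_sub hsep hjq' hjq hne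
    rw [← hj, ← hj', abs_of_pos (by linarith)] at this
    push_cast
    linarith

/-- Moving the phase from `0` to `β_K` makes at most `K` of the points `iα` wrap around `1`:
those with `0 < {-iα} ≤ β_K`. -/
lemma card_wrap_le (hcard : (betaSet α q).card = q)
    (hinj : Set.InjOn (fun j : ℕ => Int.fract (-(j : ℝ) * α)) (Finset.range q))
    {K : ℕ} (hK : K < q) :
    (Finset.univ.filter fun i : Fin q =>
      1 ≤ Int.fract (((i : ℕ) : ℝ) * α) + betaPts α q K).card ≤ K := by
  set b := (betaSet α q).orderEmbOfFin hcard with hb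
  have hrange : ∀ i : Fin q, ∃ t : Fin q, b t = Int.fract (-((i : ℕ) : ℝ) * α) := by
    intro i
    have : Int.fract (-((i : ℕ) : ℝ) * α) ∈ Set.range b := by
      rw [hb, Finset.range_orderEmbOfFin]
      simp only [betaSet, Finset.coe_image, Set.mem_image, Finset.mem_coe, Finset.mem_range]
      exact ⟨i, i.2, rfl⟩
    exact this
  choose t ht using hrange
  have hq : 0 < q := by omega
  have hb0 : b ⟨0, hq⟩ ≤ 0 := by
    have h1 := ht ⟨0, hq⟩
    simp only [Nat.cast_zero, neg_zero, zero_mul, Int.fract_zero] at h1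
    rw [← h1]
    exact b.monotone (Fin.mk_le_of_le_val (Nat.zero_le _))
  have hbK : betaPts α q K = b ⟨K, hK⟩ := betaPts_eq hcard ⟨K, hK⟩
  have hle : (Finset.univ.filter fun i : Fin q =>
      1 ≤ Int.fract (((i : ℕ) : ℝ) * α) + betaPts α q K).card ≤
      (Finset.Ioc (⟨0, hq⟩ : Fin q) ⟨K, hK⟩).card := by
    refine Finset.card_le_card_of_injOn t ?_ ?_
    · intro i hi
      simp only [Finset.coe_filter, Finset.mem_univ, true_and, Set.mem_ofPred_eq] at hi
      have hβ1 : betaPts α q K < 1 := by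
        obtain ⟨j, _, hj⟩ := betaPts_mem hcard hK
        rw [hj]
        exact Int.fract_lt_one _
      have hne : Int.fract (((i : ℕ) : ℝ) * α) ≠ 0 := by
        intro h
        rw [h] at hi
        linarith
      have hneg : Int.fract (-((i : ℕ) : ℝ) * α) = 1 - Int.fract (((i : ℕ) : ℝ) * α) := by
        rw [neg_mul, Int.fract_neg hne]
      simp only [Finset.coe_Ioc, Set.mem_Ioc]
      constructor
      · rw [← b.lt_iff_lt, ht, hneg]
        linarith [Int.fract_lt_one (((i : ℕ) : ℝ) * α)]
      · rw [← b.le_iff_le, ht, hneg, ← hbK]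
        linarith
    · intro i _ i' _ h
      have h1 : Int.fract (-((i : ℕ) : ℝ) * α) = Int.fract (-((i' : ℕ) : ℝ) * α) := by
        rw [← ht, ← ht, h]
      exact Fin.ext (hinj (by simp) (by simp) h1)
  simpa using hle

end BetaPts

/-! ### Eigenvalue repulsion -/

section Potential

variable {α lam γm γp δ ε : ℝ} {v : ℝ → ℝ} {q : ℕ}

lemma potential_add_int (hper : ∀ x : ℝ, v (x + 1) = v x) (x : ℝ) (p : ℤ) : v (x + p) = v x := by
  have h : Function.Periodic v 1 := hper
  simpa using h.int_mul p x

/-- The two-sided bound on increments of `v`, at any point, as long as no integer is crossed. -/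
lemma potential_increment (hper : ∀ x : ℝ, v (x + 1) = v x)
    (hmono : ∀ x y : ℝ, 0 ≤ x → x ≤ y → y < 1 →
      γm * (y - x) ≤ v y - v x ∧ v y - v x ≤ γp * (y - x))
    {x t : ℝ} (ht : 0 ≤ t) (hxt : Int.fract x + t < 1) :
    v x + γm * t ≤ v (x + t) ∧ v (x + t) ≤ v x + γp * t := by
  have h := hmono (Int.fract x) (Int.fract x + t) (Int.fract_nonneg x) (by linarith) hxt
  have h1 : v x = v (Int.fract x) := by
    conv_lhs => rw [← Int.fract_add_floor x]
    exact potential_add_int hper _ _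
  have h2 : v (x + t) = v (Int.fract x + t) := by
    rw [← potential_add_int hper (Int.fract x + t) ⌊x⌋]
    congr 1
    linarith [Int.fract_add_floor x]
  rw [h1, h2]
  constructor <;> linarith [h.1, h.2]

/-- After a rotation of the cycle, the diagonal at phase `{-jα}` differs from that at phase `0` by
shifts of size `0` or `δ = ‖qα‖` that do not cross an integer. -/
lemma rotated_diagonal [NeZero q] (hlam : 0 < lam) (hγm : 0 < γm) (hγp : 0 < γp)
    (hper : ∀ x : ℝ, v (x + 1) = v x)
    (hmono : ∀ x y : ℝ, 0 ≤ x → x ≤ y → y < 1 →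
      γm * (y - x) ≤ v y - v x ∧ v y - v x ≤ γp * (y - x))
    (hδ : 0 < δ) (hδε : δ < ε)
    (hsep : ∀ i : ℕ, 0 < i → i < q → ∀ p : ℤ, ε ≤ |(i : ℝ) * α - p|)
    {P : ℤ} (hP : (q : ℝ) * α = P - δ) (j i : Fin q) :
    lam * v (((i : ℕ) : ℝ) * α) ≤
        lam * v (Int.fract (-((j : ℕ) : ℝ) * α) + (((i + j : Fin q) : ℕ) : ℝ) * α) ∧
      lam * v (Int.fract (-((j : ℕ) : ℝ) * α) + (((i + j : Fin q) : ℕ) : ℝ) * α) ≤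
        lam * v (((i : ℕ) : ℝ) * α) + lam * (γp * δ) := by
  have hi := i.2
  have hj := j.2
  rcases Nat.lt_or_ge ((i : ℕ) + j) q with hij | hij
  · have hval : ((i + j : Fin q) : ℕ) = i + j := by rw [Fin.val_add, Nat.mod_eq_of_lt hij]
    have heq : v (Int.fract (-((j : ℕ) : ℝ) * α) + (((i + j : Fin q) : ℕ) : ℝ) * α) =
        v (((i : ℕ) : ℝ) * α) := by
      rw [← potential_add_int hper (Int.fract _ + _) ⌊-((j : ℕ) : ℝ) * α⌋, hval]
      congr 1
      push_cast
      linarith [Int.fract_add_floor (-((j : ℕ) : ℝ) * α)]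
    rw [heq]
    have : 0 < lam * (γp * δ) := by positivity
    constructor <;> linarith
  · have hval : ((i + j : Fin q) : ℕ) = i + j - q := by
      rw [Fin.val_add, Nat.mod_eq_sub_mod hij, Nat.mod_eq_of_lt (by omega)]
    have heq : v (Int.fract (-((j : ℕ) : ℝ) * α) + (((i + j : Fin q) : ℕ) : ℝ) * α) =
        v (((i : ℕ) : ℝ) * α + δ) := by
      rw [← potential_add_int hper (Int.fract _ + _) (⌊-((j : ℕ) : ℝ) * α⌋ + P), hval,
        Nat.cast_sub hij]
      congr 1
      push_cast
      linarith [Int.fract_add_floor (-((j : ℕ) : ℝ) * α)]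
    have hno : Int.fract (((i : ℕ) : ℝ) * α) + δ < 1 := by
      -- `i ≠ 0` here, so `iα` is at distance at least `ε > δ` from the next integer
      have h := hsep i (by omega) hi (⌊((i : ℕ) : ℝ) * α⌋ + 1)
      have hlt := Int.fract_lt_one (((i : ℕ) : ℝ) * α)
      have hf := Int.fract_add_floor (((i : ℕ) : ℝ) * α)
      push_cast at h
      rw [abs_of_nonpos (by linarith)] at h
      linarith
    obtain ⟨h1, h2⟩ := potential_increment hper hmono hδ.le hno
    rw [heq, ← mul_add]
    have : 0 < γm * δ := by positivity
    constructor
    · exact mul_le_mul_of_nonneg_left (by linarith) hlam.le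
    · exact mul_le_mul_of_nonneg_left h2 hlam.le

/-- The spectra at all phases `{-jα}` agree with that at phase `0` up to `λ γ₊ ‖qα‖`. -/
lemma sortedEigs_near [NeZero q] (hlam : 0 < lam) (hγm : 0 < γm) (hγp : 0 < γp)
    (hper : ∀ x : ℝ, v (x + 1) = v x)
    (hmono : ∀ x y : ℝ, 0 ≤ x → x ≤ y → y < 1 →
      γm * (y - x) ≤ v y - v x ∧ v y - v x ≤ γp * (y - x))
    (hδ : 0 < δ) (hδε : δ < ε)
    (hsep : ∀ i : ℕ, 0 < i → i < q → ∀ p : ℤ, ε ≤ |(i : ℝ) * α - p|)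
    {P : ℤ} (hP : (q : ℝ) * α = P - δ) {j m : ℕ} (hj : j < q) (hm : m < q) :
    sortedEigs (cycMat (n := q) fun i => lam * v (((i : ℕ) : ℝ) * α)) m ≤
        sortedEigs (periodicMat lam v α q (Int.fract (-(j : ℝ) * α))) m ∧
      sortedEigs (periodicMat lam v α q (Int.fract (-(j : ℝ) * α))) m ≤
        sortedEigs (cycMat (n := q) fun i => lam * v (((i : ℕ) : ℝ) * α)) m + lam * (γp * δ) := by
  have hdiag := rotated_diagonal hlam hγm hγp hper hmono hδ hδε hsep hP ⟨j, hj⟩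
  set d : Fin q → ℝ := fun i => lam * v (((i : ℕ) : ℝ) * α) with hd
  set d' : Fin q → ℝ := fun i => lam * v (Int.fract (-(j : ℝ) * α) + ((i : ℕ) : ℝ) * α) with hd'
  rw [periodicMat_eq_cycMat, ← hd', sortedEigs_cycMat_rotate d' ⟨j, hj⟩]
  constructor
  · have := sortedEigs_cycMat_compare d (fun i => d' (i + ⟨j, hj⟩)) ∅ 0 m (by simp)
      (by simpa using hm) 0 (fun i _ => by rw [add_zero]; exact (hdiag i).1)
    simpa only [add_zero] using this
  · have := sortedEigs_cycMat_compare (fun i => d' (i + ⟨j, hj⟩)) d ∅ 0 m (by simp)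
      (by simpa using hm) (-(lam * (γp * δ)))
      (fun i _ => by rw [← sub_eq_add_neg, sub_le_iff_le_add]; exact (hdiag i).2)
    rw [add_zero] at this
    linarith

/-- Passing from phase `0` to phase `β_K` raises all but `K` diagonal entries by `λ γ₋ β_K`. -/
lemma sortedEigs_lift [NeZero q] (hlam : 0 < lam)
    (hper : ∀ x : ℝ, v (x + 1) = v x)
    (hmono : ∀ x y : ℝ, 0 ≤ x → x ≤ y → y < 1 →
      γm * (y - x) ≤ v y - v x ∧ v y - v x ≤ γp * (y - x))
    (hε : 0 < ε)
    (hsep : ∀ i : ℕ, 0 < i → i < q → ∀ p : ℤ, ε ≤ |(i : ℝ) * α - p|)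
    {K m : ℕ} (hm : m + K < q) :
    sortedEigs (cycMat (n := q) fun i => lam * v (((i : ℕ) : ℝ) * α)) m +
        lam * (γm * betaPts α q K) ≤
      sortedEigs (periodicMat lam v α q (betaPts α q K)) (m + K) := by
  rw [periodicMat_eq_cycMat]
  have hK : K < q := by omega
  refine sortedEigs_cycMat_compare _ _ _ K m
    (card_wrap_le (betaSet_card hε hsep) (betaSet_injOn hε hsep) hK) hm _ ?_
  intro i hi
  simp only [Finset.mem_filter, Finset.mem_univ, true_and, not_le] at hi
  have hβ : 0 ≤ betaPts α q K := le_trans (by positivity) (betaPts_ge hε hsep hK)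
  have h := (potential_increment hper hmono hβ hi).1
  rw [add_comm (betaPts α q K), ← mul_add]
  exact mul_le_mul_of_nonneg_left h hlam.le

end Potential

/-- eigenvalue repulsion for the periodic restriction `H̃_{q_k}(β_l)`. -/
theorem eigenvalue_repulsion
    (α lam γm γp : ℝ) (v : ℝ → ℝ)
    (hα : Irrational α) (hlam : 0 < lam) (hγm : 0 < γm) (hγp : 0 < γp)
    (hper : ∀ x : ℝ, v (x + 1) = v x) (hv0 : v 0 = 0)
    (hmono : ∀ x y : ℝ, 0 ≤ x → x ≤ y → y < 1 →
      γm * (y - x) ≤ v y - v x ∧ v y - v x ≤ γp * (y - x))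
    (ρ : ℝ) (hρ : cfRho α < ρ) (hρ1 : ρ < 1)
    (k : ℕ) (hk : 1 ≤ k) (hodd : Odd k)
    (hQ : (cfDen α (k - 1) : ℝ) / (cfDen α (k + 1) : ℝ) ≤ ρ) :
    ∀ K m l : ℕ, K ≤ cfDen α k - 1 → m ≤ cfDen α k - K - 1 → l ≤ cfDen α k - 1 →
      lam * ((K : ℝ) * (1 - ρ) * γm / (cfDen α k : ℝ) - 3 * γp / (cfDen α (k + 1) : ℝ))
        ≤ sortedEigs (periodicMat lam v α (cfDen α k) (betaPts α (cfDen α k) l)) (m + K)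
          - sortedEigs (periodicMat lam v α (cfDen α k) (betaPts α (cfDen α k) l)) m := by
  intro K m l hK hm hl
  obtain ⟨n, rfl⟩ : ∃ n, k = n + 1 := ⟨k - 1, by omega⟩
  rw [Nat.add_sub_cancel] at hQ
  have hqpos := cfDen_pos hα (n + 1)
  have hq2pos := cfDen_pos hα (n + 1 + 1)
  have hdenerr := cfDen_mul_cfErr hα n
  have hdenerr' := cfDen_mul_cfErr hα (n + 1)
  set q := cfDen α (n + 1) with hq
  have : NeZero q := ⟨hqpos.ne'⟩
  set δ := cfErr α (n + 1) with hδdef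
  set ε := cfErr α n with hεdef
  have hδ : 0 < δ := cfErr_pos hα _
  have hε : 0 < ε := cfErr_pos hα _
  have hδε : δ < ε := cfErr_succ_lt hα n
  have hsep : ∀ i : ℕ, 0 < i → i < q → ∀ p : ℤ, ε ≤ |(i : ℝ) * α - p| := cfErr_le_abs hα n
  -- `k` odd: `q_k α` lies slightly to the left of an integer
  have hP : (q : ℝ) * α = ((cfNum α (n + 1) + q * ⌊α⌋ : ℤ) : ℝ) - δ := by
    have h := cfDen_mul_sub hα (n + 1)
    rw [hodd.neg_one_pow, ← Int.self_sub_floor] at h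
    push_cast
    linarith
  have hqR : (0 : ℝ) < q := by exact_mod_cast hqpos
  have hq2R : (0 : ℝ) < cfDen α (n + 1 + 1) := by exact_mod_cast hq2pos
  have hδle : δ ≤ 1 / cfDen α (n + 1 + 1) := by
    rw [le_div_iff₀ hq2R]
    have : 0 ≤ (q : ℝ) * cfErr α (n + 1 + 1) := mul_nonneg hqR.le (cfErr_pos hα _).le
    linarith
  have hεge : (1 - ρ) / q ≤ ε := by
    rw [div_le_iff₀ hqR]
    have h1 : (cfDen α n : ℝ) * δ ≤ cfDen α n / cfDen α (n + 1 + 1) := by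
      rw [div_eq_mul_one_div]
      exact mul_le_mul_of_nonneg_left hδle (Nat.cast_nonneg _)
    linarith
  have hKq : K < q := by omega
  have hmK : m + K < q := by omega
  have hcard := betaSet_card hε hsep
  obtain ⟨j, hj, hjβ⟩ := betaPts_mem hcard (l := l) (by omega)
  obtain ⟨j', hj', hjβ'⟩ := betaPts_mem hcard hKq
  have near_l := sortedEigs_near hlam hγm hγp hper hmono hδ hδε hsep hP hj (m := m) (by omega)
  have near_l' := sortedEigs_near hlam hγm hγp hper hmono hδ hδε hsep hP hj hmK
  have near_K := sortedEigs_near hlam hγm hγp hper hmono hδ hδε hsep hP hj' hmK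
  have lift := sortedEigs_lift hlam hper hmono hε hsep hmK
  rw [← hjβ] at near_l near_l'
  rw [← hjβ'] at near_K
  have hβ : K * ((1 - ρ) / q) ≤ betaPts α q K :=
    le_trans (mul_le_mul_of_nonneg_left hεge (Nat.cast_nonneg _)) (betaPts_ge hε hsep hKq)
  have h1 : (K : ℝ) * (1 - ρ) * γm / q ≤ γm * betaPts α q K := by
    calc (K : ℝ) * (1 - ρ) * γm / q = γm * (K * ((1 - ρ) / q)) := by ring
      _ ≤ _ := mul_le_mul_of_nonneg_left hβ hγm.le
  have h2 : 2 * (γp * δ) ≤ 3 * γp / cfDen α (n + 1 + 1) := by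
    have : γp * δ ≤ γp * (1 / cfDen α (n + 1 + 1)) := mul_le_mul_of_nonneg_left hδle hγp.le
    have h3 : 3 * γp / cfDen α (n + 1 + 1) = 3 * (γp * (1 / cfDen α (n + 1 + 1))) := by ring
    have : 0 < γp * δ := mul_pos hγp hδ
    rw [h3]
    linarith
  calc lam * ((K : ℝ) * (1 - ρ) * γm / q - 3 * γp / cfDen α (n + 1 + 1))
      ≤ lam * (γm * betaPts α q K - 2 * (γp * δ)) :=
        mul_le_mul_of_nonneg_left (by linarith) hlam.le
    _ ≤ _ := by linarith [near_l.2, near_l'.1, near_K.2]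

end
end
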